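/- Let d ≥ 2. Suppose that on an event of probability ≥ δ/2, for all k ≥ n_0 the anchored isoperimetric constant satisfies k·φ̂_k(p_c) > c, and suppose that for every η > 0 the probability that a fixed face of [-n,n]^d contains more than (cα/(2d·2^d·k^d))·n^{d-1} vertices connected to 0 inside the box tends to at most a constant multiple of η. Then one reaches a contradiction; consequently P(liminf_n n·φ̂_n(p_c) = 0) = 1. -/

import Mathlib

open MeasureTheory Filter

/-- Vertices of the lattice `ℤ^d`. -/
abbrev Vtx (d : ℕ) := Fin d → ℤ

/-- A percolation configuration: a Boolean for each (unordered) pair of vertices; only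
the values on nearest-neighbor pairs matter. -/
abbrev Config (d : ℕ) := Sym2 (Vtx d) → Bool

/-- Nearest-neighbor adjacency in `ℤ^d`. -/
def adjV {d : ℕ} (x y : Vtx d) : Prop := (∑ i, |x i - y i|) = 1

/-- The edge between `x` and `y` exists and is open in the configuration `ω`. -/
def openAdj {d : ℕ} (ω : Config d) (x y : Vtx d) : Prop := adjV x y ∧ ω s(x, y) = true

/-- The open cluster of the origin. -/
def cluster {d : ℕ} (ω : Config d) : Set (Vtx d) :=
  {x | Relation.ReflTransGen (openAdj ω) 0 x}

/-- `μ` is the i.i.d. Bernoulli bond percolation measure of parameter `p`: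
cylinder events have the product probabilities. -/
def IsBernoulli {d : ℕ} (μ : Measure (Config d)) (p : ℝ) : Prop :=
  IsProbabilityMeasure μ ∧
  ∀ (S : Finset (Sym2 (Vtx d))) (f : Sym2 (Vtx d) → Bool),
    μ {ω | ∀ e ∈ S, ω e = f e} =
      ∏ e ∈ S, (if f e then ENNReal.ofReal p else ENNReal.ofReal (1 - p))

/-- The critical point of bond percolation on `ℤ^d`. -/
noncomputable def pcrit (d : ℕ) : ℝ :=
  sInf {p : ℝ | 0 ≤ p ∧ p ≤ 1 ∧ ∃ μ : Measure (Config d), IsBernoulli μ p ∧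
    0 < μ {ω | (cluster ω).Infinite}}

/-- The number of open edges between `H` and its complement. -/
noncomputable def openBoundaryCard {d : ℕ} (ω : Config d) (H : Finset (Vtx d)) : ℕ :=
  {p : Vtx d × Vtx d | p.1 ∈ H ∧ p.2 ∉ H ∧ openAdj ω p.1 p.2}.ncard

/-- The anchored isoperimetric profile `φ̂_n`: the infimum of `|∂^o H|/|H|` over connected
subgraphs `H` of the cluster of `0` containing `0` with `0 < |H| ≤ n^d`. -/
noncomputable def anchoredProfile {d : ℕ} (ω : Config d) (n : ℕ) : ℝ :=
  sInf {r : ℝ | ∃ H : Finset (Vtx d), 0 ∈ H ∧ (↑H : Set (Vtx d)) ⊆ cluster ω ∧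
    (∀ x ∈ H, Relation.ReflTransGen (fun a b => a ∈ H ∧ b ∈ H ∧ openAdj ω a b) 0 x) ∧
    0 < H.card ∧ H.card ≤ n ^ d ∧ r = (openBoundaryCard ω H : ℝ) / H.card}

open ProbabilityTheory unitInterval
open scoped Topology

/-!
Suppose that with positive probability `n φ̂_n ≥ c` for all `n ≥ n₀`. On this event isoperimetry
forces the cluster of `0` inside the box of radius `N` to have at least `c₁ N ^ d` vertices for
every `N`. Distant boxes are independent, so with probability close to `1` some vertex of a fixed
box has such a cluster at any given scale, and by Harris' inequality and the lattice symmetries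
this cluster can be asked to be large in a prescribed direction.

Cut the lattice into large cells. A cluster which is dense in its cell touches a positive fraction
of the small boxes of the cell, and fully opening one of these would usually join it to a cluster
that is large in the prescribed direction. If the dense cluster cannot reach a dense cluster of a
cell in this direction, then a positive fraction of the small boxes is pivotal, and bounding the
sum of the corresponding covariances in `L²` shows that this is unlikely. Hence with probability
close to `1` dense clusters near a coarse-grained site can move in every direction, so that they
can be steered from each site to a neighbouring one. This event depends on finitely many edges, so
it keeps a high probability at some `p' < p`. Lipschitz percolation of such sites then produces an
infinite cluster at `p'`, so `p_c ≤ p' < p`.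
-/

/-! ### Bernoulli product measures -/

section Bernoulli

variable {E E' : Type*} {ι : Type*}

/-- The law of a family of independent Bernoulli variables of parameter `p` indexed by `E`. -/
noncomputable def bernoulliProduct (E : Type*) (p : I) : Measure (E → Bool) :=
  Measure.infinitePi fun _ => bernoulliMeasure true false p

instance (p : I) : IsProbabilityMeasure (bernoulliProduct E p) :=
  inferInstanceAs (IsProbabilityMeasure (Measure.infinitePi _))

lemma bernoulliMeasure_bool_singleton (p : I) (b : Bool) :
    bernoulliMeasure true false p {b} =
      if b then ENNReal.ofReal p else ENNReal.ofReal (1 - p) := by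
  cases b
  · rw [bernoulliMeasure_apply_of_notMem_of_mem p (measurableSet_singleton _) (by simp) rfl]
    exact (ENNReal.ofReal_eq_coe_nnreal (sub_nonneg.2 p.2.2)).symm
  · rw [bernoulliMeasure_apply_of_mem_of_notMem p (measurableSet_singleton _) rfl (by simp)]
    exact (ENNReal.ofReal_eq_coe_nnreal p.2.1).symm

/-- The event `B` depends only on the coordinates in the finite set `S`. -/
def DeterminedBy {α : Type*} (B : Set (E → α)) (S : Finset E) : Prop :=
  DependsOn (· ∈ B) (S : Set E)

namespace DeterminedBy

variable {α : Type*} {B C : Set (E → α)} {S T : Finset E}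

lemma mem_iff (h : DeterminedBy B S) {ω ω' : E → α} (hω : ∀ e ∈ S, ω e = ω' e) :
    ω ∈ B ↔ ω' ∈ B :=
  iff_of_eq (h hω)

lemma mono (h : DeterminedBy B S) (hST : S ⊆ T) : DeterminedBy B T :=
  DependsOn.mono (Finset.coe_subset.2 hST) h

lemma compl (h : DeterminedBy B S) : DeterminedBy Bᶜ S :=
  fun _ _ hω => propext (not_congr (h.mem_iff hω))

lemma union (hB : DeterminedBy B S) (hC : DeterminedBy C S) : DeterminedBy (B ∪ C) S :=
  fun _ _ hω => propext (or_congr (hB.mem_iff hω) (hC.mem_iff hω))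

lemma iUnion {ι : Sort*} {B : ι → Set (E → α)} (h : ∀ i, DeterminedBy (B i) S) :
    DeterminedBy (⋃ i, B i) S :=
  fun _ _ hω => by
    simpa only [Set.mem_iUnion] using propext (exists_congr fun i => (h i).mem_iff hω)

lemma preimage_image_restrict (h : DeterminedBy B S) : S.restrict ⁻¹' (S.restrict '' B) = B := by
  refine Set.Subset.antisymm ?_ (Set.subset_preimage_image _ _)
  rintro ω ⟨ω', hω', hωω'⟩
  exact (h.mem_iff fun e he => congrFun hωω' ⟨e, he⟩).1 hω'

lemma measurableSet {B : Set (E → Bool)} (h : DeterminedBy B S) : MeasurableSet B := by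
  rw [← h.preimage_image_restrict]
  exact (Set.toFinite _).measurableSet.preimage (Finset.measurable_restrict S)

end DeterminedBy

lemma determinedBy_forall_mem_eq {α : Type*} (S : Finset E) (f : E → α) :
    DeterminedBy {ω | ∀ e ∈ S, ω e = f e} S :=
  fun _ _ hω => propext (forall₂_congr fun e he => by rw [hω e he])

lemma bernoulliProduct_forall_mem_eq (p : I) (S : Finset E) (f : E → Bool) :
    bernoulliProduct E p {ω | ∀ e ∈ S, ω e = f e} =
      ∏ e ∈ S, if f e then ENNReal.ofReal p else ENNReal.ofReal (1 - p) := by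
  have hcyl : {ω : E → Bool | ∀ e ∈ S, ω e = f e} = Set.pi S fun e => {f e} := by
    ext ω; simp
  simp_rw [hcyl, bernoulliProduct,
    Measure.infinitePi_pi _ fun _ _ => measurableSet_singleton _, bernoulliMeasure_bool_singleton]

lemma bernoulliProduct_real_forall_mem_eq_true (p : I) (S : Finset E) :
    (bernoulliProduct E p).real {ω | ∀ e ∈ S, ω e = true} = (p : ℝ) ^ S.card := by
  rw [measureReal_def, bernoulliProduct_forall_mem_eq p S fun _ => true]
  simp [p.2.1]

lemma eq_bernoulliProduct {μ : Measure (E → Bool)} {p : I} (hμ : ∀ (S : Finset E) (f : E → Bool),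
      μ {ω | ∀ e ∈ S, ω e = f e} =
        ∏ e ∈ S, if f e then ENNReal.ofReal p else ENNReal.ofReal (1 - p)) :
    μ = bernoulliProduct E p := by
  classical
  refine ((Measure.isProjectiveLimit_infinitePi _).unique fun S => ?_).symm
  refine Measure.ext_of_singleton fun f => ?_
  rw [Measure.pi_singleton, Measure.map_apply (Finset.measurable_restrict S)
    (measurableSet_singleton _)]
  have hcyl : S.restrict (π := fun _ => Bool) ⁻¹' {f} =
      {ω | ∀ e ∈ S, ω e = if he : e ∈ S then f ⟨e, he⟩ else false} := by
    ext ω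
    simp +contextual [funext_iff]
  rw [hcyl, hμ, ← Finset.prod_coe_sort]
  simp [bernoulliMeasure_bool_singleton]

lemma measurePreserving_bernoulliProduct (p : I) {φ : E → E'} (hφ : φ.Injective) :
    MeasurePreserving (fun (ω : E' → Bool) e => ω (φ e)) (bernoulliProduct E' p)
      (bernoulliProduct E p) :=
  ⟨by fun_prop, Measure.map_infinitePi_infinitePi_of_inj hφ⟩

lemma bernoulliProduct_real_inter (p : I) {S T : Finset E} (hST : Disjoint S T)
    {B C : Set (E → Bool)} (hB : DeterminedBy B S) (hC : DeterminedBy C T) :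
    (bernoulliProduct E p).real (B ∩ C) =
      (bernoulliProduct E p).real B * (bernoulliProduct E p).real C := by
  have hindep : iIndepFun (fun e (ω : E → Bool) => ω e) (bernoulliProduct E p) :=
    iIndepFun_infinitePi (X := fun _ b => b) fun _ => measurable_id
  have h := (hindep.indepFun_finset S T hST fun e => by fun_prop).measure_inter_preimage_eq_mul
    (S.restrict '' B) (T.restrict '' C) (Set.toFinite _).measurableSet
    (Set.toFinite _).measurableSet
  change bernoulliProduct E p (S.restrict ⁻¹' _ ∩ T.restrict ⁻¹' _) =
    bernoulliProduct E p (S.restrict ⁻¹' _) * bernoulliProduct E p (T.restrict ⁻¹' _) at h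
  rw [hB.preimage_image_restrict, hC.preimage_image_restrict] at h
  simp only [measureReal_def, h, ENNReal.toReal_mul]

lemma bernoulliProduct_real_biInter (p : I) {J : Finset ι} {S : ι → Finset E}
    (hS : (J : Set ι).PairwiseDisjoint S) {B : ι → Set (E → Bool)}
    (hB : ∀ i, DeterminedBy (B i) (S i)) :
    (bernoulliProduct E p).real (⋂ i ∈ J, B i) = ∏ i ∈ J, (bernoulliProduct E p).real (B i) := by
  classical
  induction J using Finset.induction_on with
  | empty => simp
  | insert a J ha ih =>
    rw [Finset.set_biInter_insert, Finset.prod_insert ha,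
      ← ih (hS.subset (Finset.coe_subset.2 (Finset.subset_insert _ _)))]
    refine bernoulliProduct_real_inter p (T := J.biUnion S) ?_ (hB a) ?_
    · refine (Finset.disjoint_biUnion_right _ _ _).2 fun i hi => ?_
      exact hS (Finset.mem_insert_self a J) (Finset.mem_insert_of_mem hi)
        (ne_of_mem_of_not_mem hi ha).symm
    · intro ω ω' hω
      simp only [Set.mem_iInter, eq_iff_iff]
      exact forall₂_congr fun i hi =>
        (hB i).mem_iff fun e he => hω e (Finset.mem_biUnion.2 ⟨i, hi, he⟩)

/-- The probability of a configuration `f` of finitely many independent Bernoulli variables. -/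
def bernoulliWeight [Fintype E] (p : ℝ) (f : E → Bool) : ℝ :=
  ∏ e, if f e then p else 1 - p

lemma bernoulliWeight_nonneg [Fintype E] (p : I) (f : E → Bool) : 0 ≤ bernoulliWeight p f :=
  Finset.prod_nonneg fun e _ => by split_ifs <;> [exact p.2.1; exact sub_nonneg.2 p.2.2]

lemma bernoulliWeight_mul_bernoulliWeight [Fintype E] (p : ℝ) (f g : E → Bool) :
    bernoulliWeight p f * bernoulliWeight p g =
      bernoulliWeight p (f ⊓ g) * bernoulliWeight p (f ⊔ g) := by
  simp only [bernoulliWeight, ← Finset.prod_mul_distrib]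
  refine Finset.prod_congr rfl fun e _ => ?_
  cases hf : f e <;> cases hg : g e <;> simp [hf, hg, mul_comm]

lemma bernoulliProduct_real_preimage_restrict [DecidableEq E] (p : I) {S : Finset E}
    (A : Set (S → Bool)) :
    (bernoulliProduct E p).real (S.restrict ⁻¹' A) =
      ∑ f, bernoulliWeight p f * A.indicator 1 f := by
  classical
  have hweight (f : S → Bool) : (Measure.pi fun _ : S => bernoulliMeasure true false p).real {f} =
      bernoulliWeight p f := by
    simp only [measureReal_def, Measure.pi_singleton, bernoulliMeasure_bool_singleton,
      ENNReal.toReal_prod, bernoulliWeight]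
    refine Finset.prod_congr rfl fun e _ => ?_
    split_ifs
    · exact ENNReal.toReal_ofReal p.2.1
    · exact ENNReal.toReal_ofReal (sub_nonneg.2 p.2.2)
  rw [← map_measureReal_apply (Finset.measurable_restrict S) (Set.toFinite A).measurableSet,
    bernoulliProduct, Measure.infinitePi_map_restrict, ← A.coe_toFinset,
    ← sum_measureReal_singleton]
  simp [hweight, Set.indicator_apply, ← Finset.sum_filter, Set.filter_mem_univ_eq_toFinset]

lemma DeterminedBy.continuous_bernoulliProduct_real {B : Set (E → Bool)} {S : Finset E}
    (hB : DeterminedBy B S) : Continuous fun p : I => (bernoulliProduct E p).real B := by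
  classical
  rw [← hB.preimage_image_restrict]
  simp_rw [bernoulliProduct_real_preimage_restrict, bernoulliWeight]
  refine continuous_finsetSum _ fun f _ => .mul ?_ continuous_const
  refine continuous_finsetProd _ fun e _ => ?_
  split_ifs <;> fun_prop

lemma DeterminedBy.exists_lt_bernoulliProduct_real_lt {B : Set (E → Bool)}
    {S : Finset E} (hB : DeterminedBy B S) {p : I} (hp : 0 < (p : ℝ)) {t : ℝ}
    (h : (bernoulliProduct E p).real B < t) : ∃ p' < p, (bernoulliProduct E p').real B < t := by
  have : (𝓝[<] p).NeBot := nhdsLT_neBot_of_exists_lt ⟨0, hp⟩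
  have hlt : ∀ᶠ p' in 𝓝[<] p, (bernoulliProduct E p').real B < t :=
    hB.continuous_bernoulliProduct_real.continuousWithinAt.eventually_lt continuousWithinAt_const h
  exact ((eventually_mem_nhdsWithin (a := p) (s := Set.Iio p)).and hlt).exists

/-! ### Positive association -/

lemma isUpperSet_image_restrict {B : Set (E → Bool)} (hB : IsUpperSet B) (S : Finset E) :
    IsUpperSet (S.restrict '' B) := by
  classical
  rintro _ g hg ⟨ω, hω, rfl⟩
  refine ⟨fun e => if he : e ∈ S then g ⟨e, he⟩ else ω e, hB (fun e => ?_) hω, ?_⟩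
  · by_cases he : e ∈ S
    · simpa [he] using hg ⟨e, he⟩
    · simp [he]
  · ext e
    simp

lemma monotone_indicator_one {α : Type*} [Preorder α] {A : Set α} (hA : IsUpperSet A) :
    Monotone (A.indicator (1 : α → ℝ)) := by
  intro f g hfg
  by_cases hf : f ∈ A
  · simp [hf, hA hfg hf]
  · simpa [hf] using Set.indicator_nonneg (by simp) g

/-- **Harris' inequality**. -/
lemma bernoulliProduct_real_mul_le_inter (p : I) {S : Finset E} {B C : Set (E → Bool)}
    (hB : DeterminedBy B S) (hC : DeterminedBy C S) (hB' : IsUpperSet B) (hC' : IsUpperSet C) :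
    (bernoulliProduct E p).real B * (bernoulliProduct E p).real C ≤
      (bernoulliProduct E p).real (B ∩ C) := by
  classical
  have hfkg := fkg (μ := bernoulliWeight (E := S) p) (bernoulliWeight_nonneg p)
    (f := (S.restrict '' B).indicator (1 : (S → Bool) → ℝ))
    (g := (S.restrict '' C).indicator (1 : (S → Bool) → ℝ))
    (Set.indicator_nonneg (by simp)) (Set.indicator_nonneg (by simp))
    (monotone_indicator_one (isUpperSet_image_restrict hB' S))
    (monotone_indicator_one (isUpperSet_image_restrict hC' S))
    fun f g => (bernoulliWeight_mul_bernoulliWeight _ f g).le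
  have htotal : ∑ f, bernoulliWeight (E := S) p f = 1 := by
    simpa using (bernoulliProduct_real_preimage_restrict p (S := S) Set.univ).symm
  rw [htotal, one_mul] at hfkg
  rw [← hB.preimage_image_restrict, ← hC.preimage_image_restrict, ← Set.preimage_inter]
  simp only [bernoulliProduct_real_preimage_restrict]
  simpa only [Set.inter_indicator_one, Pi.mul_apply] using hfkg

lemma bernoulliProduct_real_compl_mul_le_union (p : I) {S : Finset E} {B C : Set (E → Bool)}
    (hB : DeterminedBy B S) (hC : DeterminedBy C S) (hB' : IsUpperSet B) (hC' : IsUpperSet C) :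
    (bernoulliProduct E p).real Bᶜ * (bernoulliProduct E p).real Cᶜ ≤
      (bernoulliProduct E p).real (B ∪ C)ᶜ := by
  have harris := bernoulliProduct_real_mul_le_inter p hB hC hB' hC'
  have hunion := measureReal_union_add_inter (μ := bernoulliProduct E p) (s := B) hC.measurableSet
  rw [probReal_compl_eq_one_sub hB.measurableSet, probReal_compl_eq_one_sub hC.measurableSet,
    probReal_compl_eq_one_sub (hB.union hC).measurableSet]
  linarith

/-- The square-root trick. -/
lemma prod_bernoulliProduct_real_compl_le (p : I) {S : Finset E} (J : Finset ι)
    {B : ι → Set (E → Bool)} (hB : ∀ i, DeterminedBy (B i) S) (hB' : ∀ i, IsUpperSet (B i)) :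
    ∏ i ∈ J, (bernoulliProduct E p).real (B i)ᶜ ≤ (bernoulliProduct E p).real (⋃ i ∈ J, B i)ᶜ := by
  classical
  induction J using Finset.induction_on with
  | empty => simp
  | insert a J ha ih =>
    rw [Finset.prod_insert ha, Finset.set_biUnion_insert]
    exact (mul_le_mul_of_nonneg_left ih measureReal_nonneg).trans <|
      bernoulliProduct_real_compl_mul_le_union p (hB a) (.iUnion fun i => .iUnion fun _ => hB i)
        (hB' a) (isUpperSet_iUnion₂ fun i _ => hB' i)

end Bernoulli

/-! ### Pivotality and covariances -/

open Classical in
lemma measureReal_le_mul_of_card_le_mul_card {Ω ι : Type*} [MeasurableSpace Ω] {μ : Measure Ω}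
    [IsFiniteMeasure μ] {J : Finset ι} (hJ : J.Nonempty) {B : ι → Set Ω}
    (hB : ∀ i, MeasurableSet (B i)) {W : Set Ω} {K : ℕ}
    (hW : ∀ ω ∈ W, J.card ≤ K * (J.filter fun i => ω ∈ B i).card) {q : ℝ}
    (hq : ∑ i ∈ J, μ.real (B i) ≤ J.card * q) : μ.real W ≤ K * q := by
  have hint (i : ι) : Integrable ((B i).indicator (1 : Ω → ℝ)) μ :=
    (integrable_const 1).indicator (hB i)
  have hcount (ω : Ω) (hω : ω ∈ W) :
      (J.card : ℝ) ≤ K * ∑ i ∈ J, (B i).indicator (1 : Ω → ℝ) ω := by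
    simpa [Set.indicator_apply] using (Nat.cast_le (α := ℝ)).2 (hW ω hω)
  refine le_of_mul_le_mul_left ?_ (Nat.cast_pos.2 hJ.card_pos : (0 : ℝ) < J.card)
  calc J.card * μ.real W
      ≤ J.card * μ.real {ω | (J.card : ℝ) ≤ K * ∑ i ∈ J, (B i).indicator (1 : Ω → ℝ) ω} :=
        mul_le_mul_of_nonneg_left (measureReal_mono hcount) (Nat.cast_nonneg _)
    _ ≤ ∫ ω, K * ∑ i ∈ J, (B i).indicator (1 : Ω → ℝ) ω ∂μ :=
        mul_meas_ge_le_integral_of_nonneg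
          (Eventually.of_forall fun ω => mul_nonneg (Nat.cast_nonneg _)
            (Finset.sum_nonneg fun i _ => Set.indicator_nonneg (fun _ _ => zero_le_one) ω))
          ((integrable_finsetSum _ fun i _ => hint i).const_mul _) _
    _ = K * ∑ i ∈ J, μ.real (B i) := by
        rw [integral_const_mul, integral_finsetSum _ fun i _ => hint i]
        simp only [integral_indicator_one (hB _)]
    _ ≤ K * (J.card * q) := mul_le_mul_of_nonneg_left hq (Nat.cast_nonneg _)
    _ = J.card * (K * q) := mul_left_comm _ _ _

section Covariance

variable {Ω : Type*} [MeasurableSpace Ω] {μ : Measure Ω}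

lemma two_mul_covariance_le [IsFiniteMeasure μ] {X Y : Ω → ℝ}
    (hX : MemLp X 2 μ) (hY : MemLp Y 2 μ) :
    2 * cov[X, Y; μ] ≤ Var[X; μ] + Var[Y; μ] := by
  linarith [variance_nonneg (X - Y) μ, variance_sub hX hY]

lemma memLp_indicator_one [IsFiniteMeasure μ] {A : Set Ω} (hA : MeasurableSet A) :
    MemLp (A.indicator (1 : Ω → ℝ)) 2 μ :=
  (memLp_const 1).indicator hA

variable [IsProbabilityMeasure μ]

lemma covariance_indicator_one {A B : Set Ω} (hA : MeasurableSet A) (hB : MeasurableSet B) :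
    cov[A.indicator 1, B.indicator 1; μ] = μ.real (A ∩ B) - μ.real A * μ.real B := by
  rw [covariance_eq_sub (memLp_indicator_one hA) (memLp_indicator_one hB),
    ← Set.inter_indicator_one,
    integral_indicator_one hA, integral_indicator_one hB, integral_indicator_one (hA.inter hB)]

lemma variance_indicator_one_le {A : Set Ω} (hA : MeasurableSet A) :
    Var[A.indicator (1 : Ω → ℝ); μ] ≤ 1 := by
  rw [← covariance_self (memLp_indicator_one (μ := μ) hA).aemeasurable,
    covariance_indicator_one hA hA, Set.inter_self]
  nlinarith [measureReal_le_one (μ := μ) (s := A), measureReal_nonneg (μ := μ) (s := A)]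

lemma variance_sum_indicator_one_le {ι : Type*} {J : Finset ι} {A : ι → Set Ω}
    (hA : ∀ i, MeasurableSet (A i))
    (hindep : ∀ i ∈ J, ∀ j ∈ J, i ≠ j → μ.real (A i ∩ A j) = μ.real (A i) * μ.real (A j)) :
    Var[∑ i ∈ J, (A i).indicator (1 : Ω → ℝ); μ] ≤ J.card := by
  rw [variance_sum' fun i _ => memLp_indicator_one (hA i), Finset.cast_card]
  refine Finset.sum_le_sum fun i hi => ?_
  rw [Finset.sum_eq_single_of_mem i hi fun j hj hji => ?_,
    covariance_self (memLp_indicator_one (hA i)).aemeasurable]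
  · exact variance_indicator_one_le (hA i)
  · rw [covariance_indicator_one (hA i) (hA j), hindep i hi j hj hji.symm, sub_self]

lemma sum_covariance_indicator_one_le {ι : Type*} {J : Finset ι} {A : ι → Set Ω}
    (hA : ∀ i, MeasurableSet (A i)) {F : Set Ω} (hF : MeasurableSet F)
    (hindep : ∀ i ∈ J, ∀ j ∈ J, i ≠ j → μ.real (A i ∩ A j) = μ.real (A i) * μ.real (A j)) :
    ∑ i ∈ J, cov[F.indicator 1, (A i).indicator 1; μ] ≤ √J.card := by
  obtain rfl | hJ := J.eq_empty_or_nonempty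
  · simp
  have hpos : 0 < √(J.card : ℝ) := Real.sqrt_pos.2 (by exact_mod_cast hJ.card_pos)
  have hsum : MemLp (∑ i ∈ J, (A i).indicator (1 : Ω → ℝ)) 2 μ :=
    memLp_finsetSum' _ fun i _ => memLp_indicator_one (hA i)
  have hcov := two_mul_covariance_le
    ((memLp_indicator_one (μ := μ) hF).const_smul √(J.card : ℝ)) hsum
  rw [variance_smul, covariance_smul_left, Real.sq_sqrt (Nat.cast_nonneg _),
    covariance_sum_right' (fun i _ => memLp_indicator_one (hA i)) (memLp_indicator_one hF)] at hcov
  have hVF := variance_indicator_one_le (μ := μ) hF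
  have hVA := variance_sum_indicator_one_le hA hindep
  refine le_of_mul_le_mul_left ?_ hpos
  rw [Real.mul_self_sqrt (Nat.cast_nonneg _)]
  nlinarith [Nat.cast_nonneg (α := ℝ) J.card]

end Covariance

section Pivotality

variable {E ι : Type*}

open Classical in
/-- The configuration obtained from `ω` by opening every edge of `S`. -/
noncomputable def forceOpen (S : Finset E) (ω : E → Bool) : E → Bool :=
  S.piecewise (fun _ => true) ω

lemma forceOpen_of_mem {S : Finset E} {e : E} (he : e ∈ S) (ω : E → Bool) :
    forceOpen S ω e = true := by
  classical
  exact Finset.piecewise_eq_of_mem _ _ _ he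

lemma forceOpen_of_notMem {S : Finset E} {e : E} (he : e ∉ S) (ω : E → Bool) :
    forceOpen S ω e = ω e := by
  classical
  exact Finset.piecewise_eq_of_notMem _ _ _ he

lemma le_forceOpen (S : Finset E) (ω : E → Bool) : ω ≤ forceOpen S ω := by
  classical
  exact Finset.le_piecewise_of_le_of_le _ (fun _ => Bool.le_true _) le_rfl

lemma forceOpen_eq_self {S : Finset E} {ω : E → Bool} (hω : ∀ e ∈ S, ω e = true) :
    forceOpen S ω = ω := by
  funext e
  by_cases he : e ∈ S
  · rw [forceOpen_of_mem he, hω e he]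
  · exact forceOpen_of_notMem he ω

lemma DeterminedBy.preimage_forceOpen [DecidableEq E] {F : Set (E → Bool)} {T : Finset E}
    (hF : DeterminedBy F T) (S : Finset E) : DeterminedBy (forceOpen S ⁻¹' F) (T \ S) := by
  refine fun ω ω' hω => hF fun e he => ?_
  by_cases heS : e ∈ S
  · rw [forceOpen_of_mem heS, forceOpen_of_mem heS]
  · rw [forceOpen_of_notMem heS, forceOpen_of_notMem heS]
    exact hω e (by simpa [heS] using he)

/-- Opening `S` is independent of the state of `S`, so the probability that it matters for `F` is
proportional to the covariance of `F` with `S` being open. -/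
lemma bernoulliProduct_real_forceOpen_diff_mul (p : I) (S : Finset E) {T : Finset E}
    {F : Set (E → Bool)} (hF : DeterminedBy F T) (hF' : IsUpperSet F) :
    (bernoulliProduct E p).real (forceOpen S ⁻¹' F \ F) * (p : ℝ) ^ S.card =
      cov[F.indicator 1, {ω | ∀ e ∈ S, ω e = true}.indicator 1; bernoulliProduct E p] := by
  classical
  have hS := determinedBy_forall_mem_eq S fun _ => true
  have hinter : F ∩ {ω | ∀ e ∈ S, ω e = true} =
      forceOpen S ⁻¹' F ∩ {ω | ∀ e ∈ S, ω e = true} := by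
    ext ω
    refine and_congr_left fun hω => ?_
    rw [Set.mem_preimage, forceOpen_eq_self hω]
  rw [covariance_indicator_one hF.measurableSet hS.measurableSet, hinter,
    bernoulliProduct_real_inter p Finset.sdiff_disjoint (hF.preimage_forceOpen S) hS,
    measureReal_sdiff (s₁ := forceOpen S ⁻¹' F) (fun ω hω => hF' (le_forceOpen S ω) hω)
      hF.measurableSet,
    sub_mul, bernoulliProduct_real_forall_mem_eq_true]

lemma sum_bernoulliProduct_real_forceOpen_diff_le (p : I) {J : Finset ι} {S : ι → Finset E}
    (hS : (J : Set ι).PairwiseDisjoint S) {T : Finset E} {F : Set (E → Bool)}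
    (hF : DeterminedBy F T) (hF' : IsUpperSet F) {q : ℝ} (hq : 0 < q)
    (hqS : ∀ a ∈ J, q ≤ (p : ℝ) ^ (S a).card) :
    ∑ a ∈ J, (bernoulliProduct E p).real (forceOpen (S a) ⁻¹' F \ F) ≤ √J.card / q := by
  have hdet (a : ι) := determinedBy_forall_mem_eq (S a) fun _ => true
  rw [le_div_iff₀ hq, Finset.sum_mul]
  calc ∑ a ∈ J, (bernoulliProduct E p).real (forceOpen (S a) ⁻¹' F \ F) * q
      ≤ ∑ a ∈ J, cov[F.indicator 1, {ω | ∀ e ∈ S a, ω e = true}.indicator 1;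
          bernoulliProduct E p] := by
        refine Finset.sum_le_sum fun a ha => ?_
        rw [← bernoulliProduct_real_forceOpen_diff_mul p _ hF hF']
        exact mul_le_mul_of_nonneg_left (hqS a ha) measureReal_nonneg
    _ ≤ √J.card :=
        sum_covariance_indicator_one_le (fun a => (hdet a).measurableSet) hF.measurableSet
          fun a ha b hb hab => bernoulliProduct_real_inter p (hS ha hb hab) (hdet a) (hdet b)

end Pivotality

/-! ### Clusters in finite regions of the lattice -/

section Lattice

variable {d : ℕ} {ω ω' : Config d} {D D' : Finset (Vtx d)} {x y z : Vtx d}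

lemma adjV_symm (h : adjV x y) : adjV y x := by
  simpa only [adjV, abs_sub_comm] using h

lemma abs_sub_le_one_of_adjV (h : adjV x y) (j : Fin d) : |y j - x j| ≤ 1 :=
  (Finset.single_le_sum (f := fun i => |y i - x i|) (fun _ _ => abs_nonneg _)
    (Finset.mem_univ j)).trans_eq (adjV_symm h)

lemma openAdj_symm (h : openAdj ω x y) : openAdj ω y x :=
  ⟨adjV_symm h.1, Sym2.eq_swap (a := x) (b := y) ▸ h.2⟩

lemma openAdj_mono (hω : ω ≤ ω') (h : openAdj ω x y) : openAdj ω' x y :=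
  ⟨h.1, Bool.eq_true_of_true_le (h.2 ▸ hω s(x, y))⟩

/-- `x` and `y` are joined by an open path of `ω` all of whose vertices lie in `D`; the trivial path
from `x` to itself is always allowed, even for `x ∉ D`. -/
def ConnectedIn (ω : Config d) (D : Finset (Vtx d)) : Vtx d → Vtx d → Prop :=
  Relation.ReflTransGen fun a b => a ∈ D ∧ b ∈ D ∧ openAdj ω a b

namespace ConnectedIn

lemma refl (ω : Config d) (D : Finset (Vtx d)) (x : Vtx d) : ConnectedIn ω D x x :=
  Relation.ReflTransGen.refl

lemma trans (h : ConnectedIn ω D x y) (h' : ConnectedIn ω D y z) : ConnectedIn ω D x z :=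
  Relation.ReflTransGen.trans h h'

lemma symm (h : ConnectedIn ω D x y) : ConnectedIn ω D y x :=
  have : Std.Symm fun a b => a ∈ D ∧ b ∈ D ∧ openAdj ω a b :=
    ⟨fun _ _ hab => ⟨hab.2.1, hab.1, openAdj_symm hab.2.2⟩⟩
  Std.Symm.symm (r := Relation.ReflTransGen _) _ _ h

lemma mono (hω : ω ≤ ω') (hD : D ⊆ D') (h : ConnectedIn ω D x y) : ConnectedIn ω' D' x y :=
  Relation.ReflTransGen.mono
    (fun _ _ hab => ⟨hD hab.1, hD hab.2.1, openAdj_mono hω hab.2.2⟩) _ _ h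

lemma reflTransGen_openAdj (h : ConnectedIn ω D x y) : Relation.ReflTransGen (openAdj ω) x y :=
  Relation.ReflTransGen.mono (fun _ _ hab => hab.2.2) _ _ h

lemma congr (h : ∀ e ∈ D.sym2, ω e = ω' e) (hxy : ConnectedIn ω D x y) : ConnectedIn ω' D x y :=
  Relation.ReflTransGen.mono (fun _ _ hab => ⟨hab.1, hab.2.1, hab.2.2.1,
    h _ (Finset.mk_mem_sym2_iff.2 ⟨hab.1, hab.2.1⟩) ▸ hab.2.2.2⟩) _ _ hxy

end ConnectedIn

open Classical in
/-- The set of vertices of `D` that are joined to `x` inside `D`. -/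
noncomputable def clusterIn (ω : Config d) (D : Finset (Vtx d)) (x : Vtx d) : Finset (Vtx d) :=
  D.filter (ConnectedIn ω D x)

lemma mem_clusterIn : y ∈ clusterIn ω D x ↔ y ∈ D ∧ ConnectedIn ω D x y := by
  simp [clusterIn]

lemma self_mem_clusterIn (hx : x ∈ D) : x ∈ clusterIn ω D x :=
  mem_clusterIn.2 ⟨hx, .refl ω D x⟩

lemma clusterIn_mono (hω : ω ≤ ω') (hD : D ⊆ D') (x : Vtx d) :
    clusterIn ω D x ⊆ clusterIn ω' D' x := fun _ hy =>
  mem_clusterIn.2 ⟨hD (mem_clusterIn.1 hy).1, (mem_clusterIn.1 hy).2.mono hω hD⟩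

lemma clusterIn_congr (h : ∀ e ∈ D.sym2, ω e = ω' e) (x : Vtx d) :
    clusterIn ω D x = clusterIn ω' D x := by
  ext y
  rw [mem_clusterIn, mem_clusterIn]
  exact and_congr_right fun _ => ⟨.congr h, .congr fun e he => (h e he).symm⟩

lemma clusterIn_eq_of_connectedIn (h : ConnectedIn ω D x y) :
    clusterIn ω D x = clusterIn ω D y := by
  ext z
  rw [mem_clusterIn, mem_clusterIn]
  exact and_congr_right fun _ => ⟨h.symm.trans, h.trans⟩

/-- The cube of radius `N` around `x`. -/
noncomputable def box (x : Vtx d) (N : ℕ) : Finset (Vtx d) :=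
  Finset.Icc (fun j => x j - N) fun j => x j + N

lemma mem_box {N : ℕ} : y ∈ box x N ↔ ∀ j, |y j - x j| ≤ N := by
  simp only [box, Finset.mem_Icc, Pi.le_def, ← forall_and, abs_le, sub_le_iff_le_add',
    neg_le_sub_iff_le_add]
  refine forall_congr' fun j => ?_
  constructor <;> rintro ⟨h₁, h₂⟩ <;> constructor <;> linarith

lemma card_box (x : Vtx d) (N : ℕ) : (box x N).card = (2 * N + 1) ^ d := by
  have hside (j : Fin d) : (x j + N + 1 - (x j - N)).toNat = 2 * N + 1 := by omega
  simp [box, Pi.card_Icc, hside]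

lemma self_mem_box (x : Vtx d) (N : ℕ) : x ∈ box x N := by simp [mem_box]

lemma mem_box_comm {N : ℕ} : y ∈ box x N ↔ x ∈ box y N := by
  simp only [mem_box, abs_sub_comm]

lemma mem_box_trans {N M : ℕ} (hxy : y ∈ box x M) (hyz : z ∈ box y N) : z ∈ box x (N + M) := by
  rw [mem_box] at *
  intro j
  push_cast
  exact (abs_sub_le (z j) (y j) (x j)).trans (add_le_add (hyz j) (hxy j))

lemma box_mono (x : Vtx d) {N M : ℕ} (h : N ≤ M) : box x N ⊆ box x M := fun y hy =>
  mem_box.2 fun j => (mem_box.1 hy j).trans (by exact_mod_cast h)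

lemma box_subset_box {N M K : ℕ} (h : y ∈ box x M) (hK : N + M ≤ K) : box y N ⊆ box x K :=
  fun _ hz => box_mono x hK (mem_box_trans h hz)

lemma mem_box_one_of_adjV (h : adjV x y) : y ∈ box x 1 :=
  mem_box.2 fun j => by simpa using abs_sub_le_one_of_adjV h j

end Lattice

section Automorphisms

variable {d : ℕ}

/-- Automorphisms of the lattice `ℤ^d` as a graph. -/
abbrev LatticeAut (d : ℕ) := (adjV : Vtx d → Vtx d → Prop) ≃r (adjV : Vtx d → Vtx d → Prop)

/-- The configuration seen from `φ`: the edge `e` has the state of its image under `φ` in `ω`. -/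
def pullback (φ : LatticeAut d) (ω : Config d) : Config d := fun e => ω (Sym2.map φ e)

lemma openAdj_pullback (φ : LatticeAut d) (ω : Config d) (x y : Vtx d) :
    openAdj (pullback φ ω) x y ↔ openAdj ω (φ x) (φ y) :=
  and_congr φ.map_rel_iff.symm Iff.rfl

lemma apply_mem_map_latticeAut (φ : LatticeAut d) {D : Finset (Vtx d)} {x : Vtx d} :
    φ x ∈ D.map φ.toEquiv.toEmbedding ↔ x ∈ D :=
  Finset.mem_map' φ.toEquiv.toEmbedding

lemma connectedIn_pullback (φ : LatticeAut d) (ω : Config d) (D : Finset (Vtx d)) (x y : Vtx d) :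
    ConnectedIn (pullback φ ω) D x y ↔
      ConnectedIn ω (D.map φ.toEquiv.toEmbedding) (φ x) (φ y) := by
  have hstep (a b : Vtx d) : (a ∈ D ∧ b ∈ D ∧ openAdj (pullback φ ω) a b) ↔
      φ a ∈ D.map φ.toEquiv.toEmbedding ∧ φ b ∈ D.map φ.toEquiv.toEmbedding ∧
        openAdj ω (φ a) (φ b) := by
    rw [openAdj_pullback, apply_mem_map_latticeAut, apply_mem_map_latticeAut]
  constructor
  · exact Relation.ReflTransGen.lift φ (fun a b => (hstep a b).1) x y
  · intro h
    simpa [Function.onFun, ConnectedIn] using Relation.ReflTransGen.lift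
      (p := fun a b => a ∈ D ∧ b ∈ D ∧ openAdj (pullback φ ω) a b) φ.symm
      (fun a b hab => (hstep _ _).2 (by simpa only [RelIso.apply_symm_apply] using hab)) _ _ h

lemma map_clusterIn_pullback (φ : LatticeAut d) (ω : Config d) (D : Finset (Vtx d)) (x : Vtx d) :
    (clusterIn (pullback φ ω) D x).map φ.toEquiv.toEmbedding =
      clusterIn ω (D.map φ.toEquiv.toEmbedding) (φ x) := by
  ext y
  obtain ⟨y, rfl⟩ := φ.surjective y
  rw [apply_mem_map_latticeAut, mem_clusterIn, mem_clusterIn, connectedIn_pullback,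
    apply_mem_map_latticeAut]

/-- Translation of the lattice by `a`. -/
def translation (a : Vtx d) : LatticeAut d where
  toEquiv := Equiv.addRight a
  map_rel_iff' := by simp [adjV]

@[simp]
lemma translation_apply (a x : Vtx d) : translation a x = x + a := rfl

lemma map_box_translation (a x : Vtx d) (N : ℕ) :
    (box x N).map (translation a).toEquiv.toEmbedding = box (x + a) N := by
  ext y
  obtain ⟨y, rfl⟩ := (translation a).surjective y
  rw [apply_mem_map_latticeAut]
  simp [mem_box]

/-- The lattice automorphism `x ↦ (t j * x (e j))_j` permuting the coordinates and reversing some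
of them. -/
def signedPerm (t : Fin d → ℤˣ) (e : Equiv.Perm (Fin d)) : LatticeAut d where
  toFun x j := t j * x (e j)
  invFun y j := t (e.symm j) * y (e.symm j)
  left_inv x := by
    funext j
    simp [← mul_assoc, ← Units.val_mul, Int.units_mul_self]
  right_inv y := by
    funext j
    simp [← mul_assoc, ← Units.val_mul, Int.units_mul_self]
  map_rel_iff' {x y} := by
    simp only [adjV, Equiv.coe_fn_mk, ← mul_sub, abs_mul, Int.isUnit_iff_abs_eq.1 (Units.isUnit _),
      one_mul]
    rw [Equiv.sum_comp e fun j => |x j - y j|]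

@[simp]
lemma signedPerm_apply (t : Fin d → ℤˣ) (e : Equiv.Perm (Fin d)) (x : Vtx d) (j : Fin d) :
    signedPerm t e x j = t j * x (e j) := rfl

lemma signedPerm_mem_box (t : Fin d → ℤˣ) (e : Equiv.Perm (Fin d)) {x : Vtx d} {N : ℕ} :
    signedPerm t e x ∈ box 0 N ↔ x ∈ box 0 N := by
  simp only [mem_box, Pi.zero_apply, sub_zero, signedPerm_apply, abs_mul,
    Int.isUnit_iff_abs_eq.1 (Units.isUnit _), one_mul]
  exact Equiv.forall_congr_left e |>.trans (by simp)

lemma map_box_signedPerm (t : Fin d → ℤˣ) (e : Equiv.Perm (Fin d)) (N : ℕ) :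
    (box 0 N).map (signedPerm t e).toEquiv.toEmbedding = box 0 N := by
  ext y
  obtain ⟨y, rfl⟩ := (signedPerm t e).surjective y
  rw [apply_mem_map_latticeAut, signedPerm_mem_box]

/-- Bernoulli bond percolation of parameter `p` on `ℤ^d`. -/
noncomputable abbrev percolationMeasure (d : ℕ) (p : I) : Measure (Config d) :=
  bernoulliProduct (Sym2 (Vtx d)) p

lemma measurePreserving_pullback (p : I) (φ : LatticeAut d) :
    MeasurePreserving (pullback φ) (percolationMeasure d p) (percolationMeasure d p) :=
  measurePreserving_bernoulliProduct p (Sym2.map.injective φ.injective)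

lemma percolationMeasure_real_preimage_pullback (p : I) (φ : LatticeAut d) {B : Set (Config d)}
    (hB : MeasurableSet B) :
    (percolationMeasure d p).real (pullback φ ⁻¹' B) = (percolationMeasure d p).real B :=
  (measurePreserving_pullback p φ).measureReal_preimage hB.nullMeasurableSet

end Automorphisms

/-! ### Volume growth from anchored isoperimetry -/

section Growth

lemma mul_card_le_of_le_mul_anchoredProfile {d : ℕ} {ω : Config d} {c : ℝ} {n : ℕ}
    (hc : c ≤ n * anchoredProfile ω n) {H : Finset (Vtx d)} (h0 : 0 ∈ H)
    (hconn : ∀ x ∈ H, ConnectedIn ω H 0 x) (hn : H.card ≤ n ^ d) :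
    c * H.card ≤ n * openBoundaryCard ω H := by
  have hpos : 0 < H.card := Finset.card_pos.2 ⟨0, h0⟩
  have hprofile : anchoredProfile ω n ≤ openBoundaryCard ω H / H.card := by
    refine csInf_le ⟨0, ?_⟩
      ⟨H, h0, fun x hx => (hconn x hx).reflTransGen_openAdj, hconn, hpos, hn, rfl⟩
    rintro _ ⟨H', _, _, _, _, _, rfl⟩
    positivity
  rw [← le_div_iff₀ (by exact_mod_cast hpos), mul_div_assoc]
  exact hc.trans (mul_le_mul_of_nonneg_left hprofile n.cast_nonneg)

lemma ConnectedIn.connectedIn_clusterIn {d : ℕ} {ω : Config d} {D : Finset (Vtx d)} {x y : Vtx d}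
    (h : ConnectedIn ω D x y) : ConnectedIn ω (clusterIn ω D x) x y := by
  induction h with
  | refl => exact .refl _ _ _
  | tail hxa hab ih =>
    exact ih.tail ⟨mem_clusterIn.2 ⟨hab.1, hxa⟩, mem_clusterIn.2 ⟨hab.2.1, hxa.tail hab⟩, hab.2.2⟩

lemma openBoundaryCard_clusterIn_box_le {d : ℕ} (ω : Config d) (x : Vtx d) (k : ℕ) :
    openBoundaryCard ω (clusterIn ω (box x k) x) ≤
      3 ^ d * (clusterIn ω (box x (k + 1)) x \ clusterIn ω (box x k) x).card := by
  classical
  set H := clusterIn ω (box x k) x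
  set H' := clusterIn ω (box x (k + 1)) x
  have hsub : {e : Vtx d × Vtx d | e.1 ∈ H ∧ e.2 ∉ H ∧ openAdj ω e.1 e.2} ⊆
      ((H' \ H).biUnion fun b => (box b 1).image fun a => (a, b) : Finset (Vtx d × Vtx d)) := by
    rintro ⟨a, b⟩ ⟨ha : a ∈ H, hb : b ∉ H, hab : openAdj ω a b⟩
    have hbox := box_mono x k.le_succ
    obtain ⟨haD, hxa⟩ := mem_clusterIn.1 ha
    have hbD : b ∈ box x (k + 1) := add_comm 1 k ▸ mem_box_trans haD (mem_box_one_of_adjV hab.1)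
    have hbH' : b ∈ H' :=
      mem_clusterIn.2 ⟨hbD, (hxa.mono le_rfl hbox).tail ⟨hbox haD, hbD, hab⟩⟩
    simp only [Finset.coe_biUnion, Set.mem_iUnion, Finset.mem_coe, Finset.mem_sdiff,
      Finset.mem_image, Prod.mk.injEq]
    exact ⟨b, ⟨hbH', hb⟩, a, mem_box_one_of_adjV (adjV_symm hab.1), rfl, rfl⟩
  refine (Set.ncard_le_ncard hsub (Finset.finite_toSet _)).trans ?_
  rw [Set.ncard_coe_finset, mul_comm]
  refine Finset.card_biUnion_le_card_mul _ _ _ fun b _ => Finset.card_image_le.trans_eq ?_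
  rw [card_box]

lemma add_pow_succ_le {a r : ℝ} (ha : 0 ≤ a) (har : a ≤ r) (e : ℕ) :
    (r + a) ^ (e + 1) ≤ r ^ (e + 1) + (e + 1) * 2 ^ e * a * r ^ e := by
  have hr : 0 ≤ r := ha.trans har
  have hdiff := (le_abs_self _).trans (abs_pow_sub_pow_le (r + a) r (e + 1))
  rw [add_sub_cancel_left, abs_of_nonneg ha, abs_of_nonneg hr, abs_of_nonneg (add_nonneg hr ha),
    max_eq_left (le_add_of_nonneg_right ha), Nat.add_sub_cancel] at hdiff
  have hpow : (r + a) ^ e ≤ (2 * r) ^ e := pow_le_pow_left₀ (add_nonneg hr ha) (by linarith) e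
  rw [mul_pow] at hpow
  push_cast at hdiff
  nlinarith [mul_le_mul_of_nonneg_left hpow (by positivity : 0 ≤ a * (e + 1 : ℝ))]

-- Discrete form of the differential inequality `V' ≥ c V^{e/(e+1)}`, with `r` in the role of
-- `V^{1/(e+1)}`.
lemma one_add_mul_pow_le_of_increment {V : ℕ → ℝ} {a c : ℝ} {e : ℕ} (ha : 0 ≤ a) (ha1 : a ≤ 1)
    (hac : (e + 1) * 2 ^ e * a ≤ c) (hV0 : 1 ≤ V 0) (hmono : Monotone V)
    (hV : ∀ k r, 1 ≤ r → r ^ (e + 1) ≤ V k → V k < (r + 1) ^ (e + 1) →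
      c * r ^ e ≤ V (k + 1) - V k) (k : ℕ) :
    (1 + a * k) ^ (e + 1) ≤ V k := by
  induction k with
  | zero => simpa using hV0
  | succ k ih =>
    set r : ℝ := 1 + a * k
    have hr : 1 ≤ r := le_add_of_nonneg_right (by positivity)
    rw [show 1 + a * ((k + 1 : ℕ) : ℝ) = r + a by push_cast; ring]
    rcases le_or_gt ((r + a) ^ (e + 1)) (V k) with hlarge | hsmall
    · exact hlarge.trans (hmono k.le_succ)
    · have hinc := hV k r hr ih
        (hsmall.trans_le (pow_le_pow_left₀ (by linarith) (by linarith) _))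
      have hcr := mul_le_mul_of_nonneg_right hac (pow_nonneg (zero_le_one.trans hr) e)
      linarith [add_pow_succ_le ha (ha1.trans hr) e]

lemma card_clusterIn_box_monotone {d : ℕ} (ω : Config d) (x : Vtx d) :
    Monotone fun k => ((clusterIn ω (box x k) x).card : ℝ) := fun _ _ hkl =>
  Nat.cast_le.2 (Finset.card_le_card (clusterIn_mono le_rfl (box_mono x hkl) x))

lemma mul_pow_le_card_clusterIn_sub {e n₀ k : ℕ} {c r : ℝ} {ω : Config (e + 1)} (hc : 0 ≤ c)
    (hω : ∀ n : ℕ, n₀ ≤ n → c ≤ n * anchoredProfile ω n) (hr : 1 ≤ r)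
    (hlow : r ^ (e + 1) ≤ (clusterIn ω (box 0 k) 0).card)
    (hupp : (clusterIn ω (box 0 k) 0).card < (r + 1) ^ (e + 1)) :
    c / (3 ^ (e + 1) * (n₀ + 3)) * r ^ e ≤
      (clusterIn ω (box 0 (k + 1)) 0).card - (clusterIn ω (box 0 k) 0).card := by
  set H := clusterIn ω (box 0 k) 0
  set H' := clusterIn ω (box 0 (k + 1)) 0
  have hboundary : (openBoundaryCard ω H : ℝ) ≤ 3 ^ (e + 1) * (H'.card - H.card) := by
    rw [← Nat.cast_sub (Finset.card_le_card (clusterIn_mono le_rfl (box_mono 0 k.le_succ) 0)),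
      ← Finset.card_sdiff_of_subset (clusterIn_mono le_rfl (box_mono 0 k.le_succ) 0)]
    exact_mod_cast openBoundaryCard_clusterIn_box_le ω 0 k
  set n : ℕ := ⌈r + 1⌉₊ + n₀ with hn
  have hrn : r + 1 ≤ n := (Nat.le_ceil _).trans (by simp [hn])
  have hnr : (n : ℝ) ≤ (n₀ + 3) * r := by
    have := Nat.ceil_lt_add_one (by linarith : 0 ≤ r + 1)
    push_cast [hn]
    nlinarith [n₀.cast_nonneg (α := ℝ)]
  have hHn : H.card ≤ n ^ (e + 1) := by
    exact_mod_cast hupp.le.trans (pow_le_pow_left₀ (by linarith) hrn _)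
  have hisop : c * H.card ≤ n * openBoundaryCard ω H :=
    mul_card_le_of_le_mul_anchoredProfile (hω n (by omega)) (self_mem_clusterIn (self_mem_box 0 k))
      (fun x hx => (mem_clusterIn.1 hx).2.connectedIn_clusterIn) hHn
  have hr0 : 0 < r := by linarith
  rw [div_mul_eq_mul_div, div_le_iff₀ (by positivity)]
  refine le_of_mul_le_mul_right ?_ hr0
  calc c * r ^ e * r = c * r ^ (e + 1) := by ring
    _ ≤ c * H.card := mul_le_mul_of_nonneg_left hlow hc
    _ ≤ n * openBoundaryCard ω H := hisop
    _ ≤ (n₀ + 3) * r * (3 ^ (e + 1) * (H'.card - H.card)) :=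
      mul_le_mul hnr hboundary (Nat.cast_nonneg _) (by positivity)
    _ = (H'.card - H.card) * (3 ^ (e + 1) * (n₀ + 3)) * r := by ring

lemma exists_forall_mul_pow_le_card_clusterIn {d : ℕ} (hd : 1 ≤ d) {c : ℝ} (hc : 0 < c) (n₀ : ℕ) :
    ∃ c₁ : ℝ, 0 < c₁ ∧ ∀ ω : Config d, (∀ n : ℕ, n₀ ≤ n → c ≤ n * anchoredProfile ω n) →
      ∀ N : ℕ, c₁ * (N : ℝ) ^ d ≤ (clusterIn ω (box 0 N) 0).card := by
  obtain ⟨e, rfl⟩ : ∃ e, d = e + 1 := ⟨d - 1, by omega⟩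
  set c' : ℝ := c / (3 ^ (e + 1) * (n₀ + 3))
  set a : ℝ := min 1 (c' / ((e + 1) * 2 ^ e))
  have hc' : 0 < c' := by positivity
  have ha : 0 < a := lt_min one_pos (div_pos hc' (by positivity))
  have hac : (e + 1) * 2 ^ e * a ≤ c' := by
    rw [mul_comm, ← le_div_iff₀ (by positivity)]
    exact min_le_right _ _
  refine ⟨a ^ (e + 1), by positivity, fun ω hω N => ?_⟩
  have hgrowth := one_add_mul_pow_le_of_increment
    (V := fun k => ((clusterIn ω (box 0 k) 0).card : ℝ)) ha.le (min_le_left _ _) hac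
    (Nat.one_le_cast.2 (Finset.card_pos.2 ⟨0, self_mem_clusterIn (self_mem_box 0 0)⟩))
    (card_clusterIn_box_monotone ω 0)
    (fun k r hr hlow hupp => mul_pow_le_card_clusterIn_sub hc.le hω hr hlow hupp) N
  rw [← mul_pow]
  exact (pow_le_pow_left₀ (by positivity) (by linarith) _).trans hgrowth

end Growth

/-! ### Large clusters near the origin -/

section Translates

variable {d : ℕ}

lemma disjoint_sym2 {α : Type*} {D D' : Finset α} (h : Disjoint D D') :
    Disjoint D.sym2 D'.sym2 :=
  Finset.disjoint_left.2 fun e he he' => Finset.disjoint_left.1 h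
    (Finset.mem_sym2_iff.1 he _ e.out_fst_mem) (Finset.mem_sym2_iff.1 he' _ e.out_fst_mem)

lemma DeterminedBy.preimage_pullback {B : Set (Config d)} {D : Finset (Vtx d)}
    (hB : DeterminedBy B D.sym2) (φ : LatticeAut d) :
    DeterminedBy (pullback φ ⁻¹' B) (D.map φ.toEquiv.toEmbedding).sym2 := fun _ _ h =>
  hB fun e he => h _ <| by
    rw [Finset.sym2_map]
    exact Finset.mem_map_of_mem _ he

lemma DeterminedBy.preimage_translation {B : Set (Config d)} {y : Vtx d} {n : ℕ}
    (hB : DeterminedBy B (box y n).sym2) (x : Vtx d) :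
    DeterminedBy (pullback (translation x) ⁻¹' B) (box (y + x) n).sym2 :=
  map_box_translation x y n ▸ hB.preimage_pullback (translation x)

/-- The points `i (2n+2) (1, …, 1)`, whose boxes of radius `n` are disjoint. -/
def spacedPoint (d n : ℕ) (i : ℕ) : Vtx d := fun _ => i * (2 * n + 2)

lemma spacedPoint_mem_box {n i M : ℕ} (hi : i ≤ M) :
    spacedPoint d n i ∈ box 0 (M * (2 * n + 2)) := by
  refine mem_box.2 fun j => ?_
  rw [spacedPoint, Pi.zero_apply, sub_zero, abs_of_nonneg (by positivity)]
  exact_mod_cast Nat.mul_le_mul_right _ hi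

lemma disjoint_box_spacedPoint (hd : 1 ≤ d) (n : ℕ) {i j : ℕ} (hij : i ≠ j) :
    Disjoint (box (spacedPoint d n i) n) (box (spacedPoint d n j) n) := by
  refine Finset.disjoint_left.2 fun y hi hj => hij ?_
  have hi := abs_le.1 (mem_box.1 hi ⟨0, hd⟩)
  have hj := abs_le.1 (mem_box.1 hj ⟨0, hd⟩)
  simp only [spacedPoint] at hi hj
  have hlt : (i - j : ℤ) < 1 := by nlinarith
  have hgt : (-1 : ℤ) < i - j := by nlinarith
  omega

lemma real_biInter_compl_preimage_spacedPoint (hd : 1 ≤ d) (p : I) {n : ℕ} {A : Set (Config d)}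
    (hA : DeterminedBy A (box 0 n).sym2) (M : ℕ) :
    (percolationMeasure d p).real
        (⋂ i ∈ Finset.range M, (pullback (translation (spacedPoint d n i)) ⁻¹' A)ᶜ) =
      (1 - (percolationMeasure d p).real A) ^ M := by
  rw [bernoulliProduct_real_biInter p (S := fun i => (box (spacedPoint d n i) n).sym2)
    (fun i _ j _ hij => disjoint_sym2 (disjoint_box_spacedPoint hd n hij))
    (fun i => by simpa using (hA.preimage_translation (spacedPoint d n i)).compl)]
  simp_rw [← Set.preimage_compl,
    percolationMeasure_real_preimage_pullback p _ hA.compl.measurableSet,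
    probReal_compl_eq_one_sub hA.measurableSet, Finset.prod_const, Finset.card_range]

-- Far away translates of `A n` are independent, and `A n` is nearly the event `A N` for every `N`
-- once `n` is large.
lemma exists_forall_real_compl_exists_translate_le (hd : 1 ≤ d) (p : I) {A : ℕ → Set (Config d)}
    (hA : ∀ n, DeterminedBy (A n) (box 0 n).sym2) (hanti : Antitone A) {δ : ℝ} (hδ : 0 < δ)
    (hAδ : ∀ n, δ ≤ (percolationMeasure d p).real (A n)) {η : ℝ} (hη : 0 < η) :
    ∃ m : ℕ, ∀ N : ℕ, (percolationMeasure d p).real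
      {ω | ∃ x ∈ box 0 m, pullback (translation x) ω ∈ A N}ᶜ ≤ η := by
  set μ := percolationMeasure d p
  obtain ⟨M, hM⟩ : ∃ M : ℕ, (1 - δ) ^ M < η / 2 :=
    exists_pow_lt_of_lt_one (half_pos hη) (sub_lt_self 1 hδ)
  have hbdd : BddBelow (Set.range fun n => μ.real (A n)) :=
    ⟨0, Set.forall_mem_range.2 fun _ => measureReal_nonneg⟩
  obtain ⟨n, hn⟩ : ∃ n, μ.real (A n) < (⨅ n, μ.real (A n)) + η / (2 * (M + 1)) :=
    exists_lt_of_ciInf_lt (lt_add_of_pos_right _ (by positivity))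
  refine ⟨M * (2 * n + 2), fun N => ?_⟩
  set τ : ℕ → Config d → Config d := fun i => pullback (translation (spacedPoint d n i))
  have hsub : {ω | ∃ x ∈ box 0 (M * (2 * n + 2)), pullback (translation x) ω ∈ A N}ᶜ ⊆
      (⋂ i ∈ Finset.range M, (τ i ⁻¹' A n)ᶜ) ∪
        ⋃ i ∈ Finset.range M, τ i ⁻¹' (A n \ A (max N n)) := by
    intro ω hω
    by_contra hcon
    simp only [Set.mem_union, Set.mem_iInter, Set.mem_iUnion, not_or, not_forall, not_exists,
      Set.mem_compl_iff, not_not, Set.preimage_sdiff, Set.mem_sdiff, not_and] at hcon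
    obtain ⟨⟨i, hi, hin⟩, hmax⟩ := hcon
    exact hω ⟨_, spacedPoint_mem_box (Finset.mem_range.1 hi).le,
      hanti (le_max_left N n) (hmax i hi hin)⟩
  have hindep : μ.real (⋂ i ∈ Finset.range M, (τ i ⁻¹' A n)ᶜ) ≤ η / 2 := by
    rw [real_biInter_compl_preimage_spacedPoint hd p (hA n)]
    exact (pow_le_pow_left₀ (sub_nonneg.2 measureReal_le_one)
      (sub_le_sub_left (hAδ n) 1) M).trans hM.le
  have hdiff : μ.real (A n \ A (max N n)) ≤ η / (2 * (M + 1)) := by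
    rw [measureReal_sdiff (hanti (le_max_right N n)) (hA _).measurableSet]
    linarith [ciInf_le hbdd (max N n)]
  have hunion : μ.real (⋃ i ∈ Finset.range M, τ i ⁻¹' (A n \ A (max N n))) ≤ η / 2 := by
    refine (measureReal_biUnion_finset_le _ _).trans ?_
    simp_rw [τ, μ, percolationMeasure_real_preimage_pullback p _
      ((hA n).measurableSet.diff (hA _).measurableSet), Finset.sum_const, Finset.card_range,
      nsmul_eq_mul]
    refine (mul_le_mul_of_nonneg_left hdiff M.cast_nonneg).trans ?_
    rw [mul_div_assoc', div_le_div_iff₀ (by positivity) two_pos]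
    nlinarith
  linarith [(measureReal_mono (μ := μ) hsub).trans (measureReal_union_le _ _)]

/-- The event that, for every radius `N ≤ n`, the cluster of the origin inside `box 0 N` has volume
at least `c N^d`. -/
def volumeGrowthEvent (d : ℕ) (c : ℝ) (n : ℕ) : Set (Config d) :=
  {ω | ∀ N ≤ n, c * (N : ℝ) ^ d ≤ (clusterIn ω (box 0 N) 0).card}

lemma antitone_volumeGrowthEvent (c : ℝ) : Antitone (volumeGrowthEvent d c) :=
  fun _ _ hnn' _ hω N hN => hω N (hN.trans hnn')

lemma determinedBy_volumeGrowthEvent (c : ℝ) (n : ℕ) :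
    DeterminedBy (volumeGrowthEvent d c n) (box 0 n).sym2 := fun ω ω' h =>
  propext <| forall₂_congr fun N hN => by
    rw [clusterIn_congr fun e he => h e (Finset.sym2_mono (box_mono 0 hN) he)]

lemma card_clusterIn_pullback_translation (ω : Config d) (x : Vtx d) (N : ℕ) :
    (clusterIn (pullback (translation x) ω) (box 0 N) 0).card = (clusterIn ω (box x N) x).card := by
  have h := map_clusterIn_pullback (translation x) ω (box 0 N) 0
  rw [map_box_translation, translation_apply, zero_add] at h
  rw [← h, Finset.card_map]

lemma exists_forall_real_compl_exists_le_card_clusterIn_le (hd : 1 ≤ d) (p : I) {c δ : ℝ}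
    (hδ : 0 < δ) (h : ∀ n, δ ≤ (percolationMeasure d p).real (volumeGrowthEvent d c n)) {η : ℝ}
    (hη : 0 < η) :
    ∃ m : ℕ, ∀ N : ℕ, (percolationMeasure d p).real
      {ω | ∃ x ∈ box 0 m, c * (N : ℝ) ^ d ≤ (clusterIn ω (box x N) x).card}ᶜ ≤ η := by
  obtain ⟨m, hm⟩ := exists_forall_real_compl_exists_translate_le hd p
    (determinedBy_volumeGrowthEvent c) (antitone_volumeGrowthEvent c) hδ h hη
  refine ⟨m, fun N => (measureReal_mono (Set.compl_subset_compl.2 ?_)).trans (hm N)⟩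
  rintro ω ⟨x, hx, hxN⟩
  exact ⟨x, hx, card_clusterIn_pullback_translation ω x N ▸ hxN N le_rfl⟩

end Translates

/-! ### Directed large clusters -/

section Directions

variable {d : ℕ}

/-- A direction in `ℤ^d`: a main coordinate together with an orthant, encoded by its signs. -/
abbrev Direction (d : ℕ) := Fin d × (Fin d → ℤˣ)

/-- The part of the orthant of `D` at height more than `l` along the main coordinate of `D`. -/
def sector (l : ℕ) (D : Direction d) : Set (Vtx d) :=
  {y | (∀ j, 0 ≤ (D.2 j : ℤ) * y j) ∧ (l : ℤ) < D.2 D.1 * y D.1}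

lemma exists_mem_sector {l : ℕ} {y : Vtx d} (hy : y ∉ box 0 l) : ∃ D, y ∈ sector l D := by
  simp only [mem_box, Pi.zero_apply, sub_zero, not_forall, not_le] at hy
  obtain ⟨i, hi⟩ := hy
  have hsign (j : Fin d) : ((if 0 ≤ y j then 1 else -1 : ℤˣ) : ℤ) * y j = |y j| := by
    split_ifs with h
    · simp [abs_of_nonneg h]
    · simp [abs_of_neg (not_le.1 h)]
  refine ⟨(i, fun j => if 0 ≤ y j then 1 else -1), fun j => ?_, ?_⟩
  · simpa only [hsign] using abs_nonneg (y j)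
  · simpa only [hsign] using hi

open Classical in
lemma card_le_card_box_add_sum_card_sector (C : Finset (Vtx d)) (l : ℕ) :
    C.card ≤ (box (0 : Vtx d) l).card +
      ∑ D : Direction d, (C.filter fun y => y ∈ sector l D).card := by
  have hcover : C ⊆ box 0 l ∪ Finset.univ.biUnion fun D : Direction d =>
      C.filter fun y => y ∈ sector l D := by
    intro y hy
    rw [Finset.mem_union, or_iff_not_imp_left]
    intro hbox
    obtain ⟨D, hD⟩ := exists_mem_sector hbox
    exact Finset.mem_biUnion.2 ⟨D, Finset.mem_univ D, Finset.mem_filter.2 ⟨hy, hD⟩⟩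
  exact (Finset.card_le_card hcover).trans
    ((Finset.card_union_le _ _).trans (Nat.add_le_add_left Finset.card_biUnion_le _))

open Classical in
lemma exists_pow_le_card_mul_card_sector (hd : 1 ≤ d) {C : Finset (Vtx d)} {l : ℕ} (hl : 1 ≤ l)
    (hC : 2 * 3 ^ d * l ^ d ≤ C.card) :
    ∃ D : Direction d,
      l ^ d ≤ Fintype.card (Direction d) * (C.filter fun y => y ∈ sector l D).card := by
  have hne : (Finset.univ : Finset (Direction d)).Nonempty :=
    ⟨(⟨0, hd⟩, fun _ => 1), Finset.mem_univ _⟩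
  have hbox : (box (0 : Vtx d) l).card ≤ 3 ^ d * l ^ d := by
    rw [card_box, ← mul_pow]
    exact Nat.pow_le_pow_left (by omega) d
  have hsum : l ^ d ≤ ∑ D : Direction d, (C.filter fun y => y ∈ sector l D).card := by
    nlinarith [card_le_card_box_add_sum_card_sector C l, Nat.one_le_pow d 3 (by norm_num)]
  by_contra! hcon
  have hlt := Finset.sum_lt_sum_of_nonempty hne fun D _ => hcon D
  rw [← Finset.mul_sum, Finset.sum_const, Finset.card_univ, smul_eq_mul] at hlt
  exact hlt.not_ge (Nat.mul_le_mul_left _ hsum)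

open Classical in
/-- Some vertex of `box b m` has a cluster in `box b (J * l)` which contains a positive fraction of
`l ^ d` vertices lying in direction `D` from `b`. -/
def sectorEvent (J m l : ℕ) (D : Direction d) (b : Vtx d) : Set (Config d) :=
  {ω | ∃ x ∈ box b m, l ^ d ≤ Fintype.card (Direction d) *
    ((clusterIn ω (box b (J * l)) x).filter fun y => y - b ∈ sector l D).card}

lemma determinedBy_sectorEvent (J m l : ℕ) (D : Direction d) (b : Vtx d) :
    DeterminedBy (sectorEvent J m l D b) (box b (J * l)).sym2 := fun _ _ h =>
  propext <| exists_congr fun x => by simp only [clusterIn_congr h]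

lemma isUpperSet_sectorEvent (J m l : ℕ) (D : Direction d) (b : Vtx d) :
    IsUpperSet (sectorEvent J m l D b) := by
  classical
  rintro ω ω' hω ⟨x, hx, h⟩
  exact ⟨x, hx, h.trans (Nat.mul_le_mul_left _ (Finset.card_le_card
    (Finset.filter_subset_filter _ (clusterIn_mono hω le_rfl x))))⟩

open Classical in
lemma preimage_pullback_sectorEvent (J m l : ℕ) {D D' : Direction d} {b b' : Vtx d}
    (φ : LatticeAut d) (hbox : ∀ N, (box b N).map φ.toEquiv.toEmbedding = box b' N)
    (hsector : ∀ y, φ y - b' ∈ sector l D' ↔ y - b ∈ sector l D) :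
    pullback φ ⁻¹' sectorEvent J m l D b = sectorEvent J m l D' b' := by
  ext ω
  refine φ.toEquiv.exists_congr fun x => ?_
  have hcluster := map_clusterIn_pullback φ ω (box b (J * l)) x
  rw [hbox] at hcluster
  change _ ↔ φ x ∈ box b' m ∧ _ ≤ _ * (Finset.filter _ (clusterIn ω _ (φ x))).card
  rw [← hcluster, Finset.filter_map, Finset.card_map, ← hbox m, apply_mem_map_latticeAut]
  simp only [Function.comp_def]
  exact and_congr_right fun _ => by simp only [← hsector]; rfl

lemma exists_signedPerm_mem_sector_iff (D D' : Direction d) : ∃ t e, ∀ (l : ℕ) (y : Vtx d),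
    signedPerm t e y ∈ sector l D' ↔ y ∈ sector l D := by
  set e : Equiv.Perm (Fin d) := Equiv.swap D.1 D'.1 with he
  refine ⟨fun j => D'.2 j * D.2 (e j), e, fun l y => ?_⟩
  have hsign (j : Fin d) : (D'.2 j : ℤ) * ((D'.2 j * D.2 (e j) : ℤˣ) * y (e j)) =
      D.2 (e j) * y (e j) := by
    rw [← mul_assoc, ← Units.val_mul, ← mul_assoc, Int.units_mul_self, one_mul]
  have hmain : e D'.1 = D.1 := by rw [he, Equiv.swap_apply_right]
  simp only [sector, Set.mem_ofPred_eq, signedPerm_apply, hsign]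
  rw [hmain]
  exact and_congr_left fun _ => e.forall_congr_right (q := fun j => 0 ≤ (D.2 j : ℤ) * y j)

lemma real_sectorEvent_eq (p : I) (J m l : ℕ) (D D' : Direction d) (b b' : Vtx d) :
    (percolationMeasure d p).real (sectorEvent J m l D b) =
      (percolationMeasure d p).real (sectorEvent J m l D' b') := by
  have hmeas (D : Direction d) := (determinedBy_sectorEvent J m l D 0).measurableSet
  have htrans (D : Direction d) (b : Vtx d) :
      (percolationMeasure d p).real (sectorEvent J m l D b) =
        (percolationMeasure d p).real (sectorEvent J m l D 0) := by
    rw [← percolationMeasure_real_preimage_pullback p (translation b) (hmeas D),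
      preimage_pullback_sectorEvent J m l (D' := D) (b' := b) (translation b)
        (fun N => by rw [map_box_translation, zero_add]) (fun y => by simp)]
  obtain ⟨t, e, hte⟩ := exists_signedPerm_mem_sector_iff D D'
  rw [htrans D, htrans D', ← percolationMeasure_real_preimage_pullback p (signedPerm t e) (hmeas D),
    preimage_pullback_sectorEvent J m l (D' := D') (b' := 0) (signedPerm t e)
      (map_box_signedPerm t e) (fun y => by simp only [sub_zero, hte])]

open Classical in
lemma setOf_exists_le_card_clusterIn_subset (hd : 1 ≤ d) {c : ℝ} {k m l : ℕ}
    (hk : 2 * 3 ^ d ≤ c * k ^ d) (hml : m ≤ l) (hl : 1 ≤ l) :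
    {ω : Config d | ∃ x ∈ box 0 m,
        c * ((k * l : ℕ) : ℝ) ^ d ≤ (clusterIn ω (box x (k * l)) x).card} ⊆
      ⋃ D ∈ (Finset.univ : Finset (Direction d)), sectorEvent (k + 1) m l D 0 := by
  rintro ω ⟨x, hx, hvol⟩
  have hsub : clusterIn ω (box x (k * l)) x ⊆ clusterIn ω (box 0 ((k + 1) * l)) x :=
    clusterIn_mono le_rfl (box_subset_box hx (by nlinarith)) x
  have hcard : 2 * 3 ^ d * l ^ d ≤ (clusterIn ω (box 0 ((k + 1) * l)) x).card := by
    have : (2 * 3 ^ d * l ^ d : ℝ) ≤ (clusterIn ω (box 0 ((k + 1) * l)) x).card := calc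
      (2 * 3 ^ d * l ^ d : ℝ) ≤ c * k ^ d * l ^ d := by gcongr
      _ = c * ((k * l : ℕ) : ℝ) ^ d := by push_cast; ring
      _ ≤ _ := hvol.trans (by exact_mod_cast Finset.card_le_card hsub)
    exact_mod_cast this
  obtain ⟨D, hD⟩ := exists_pow_le_card_mul_card_sector hd hl hcard
  exact Set.mem_biUnion (Finset.mem_univ D) ⟨x, hx, by simpa only [sub_zero] using hD⟩

lemma exists_forall_real_compl_sectorEvent_le (hd : 1 ≤ d) (p : I) {c δ : ℝ} (hc : 0 < c)
    (hδ : 0 < δ) (h : ∀ n, δ ≤ (percolationMeasure d p).real (volumeGrowthEvent d c n)) :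
    ∃ J : ℕ, ∀ η : ℝ, 0 < η → ∃ m : ℕ, ∀ l : ℕ, m ≤ l → 1 ≤ l →
      ∀ (D : Direction d) (b : Vtx d),
        (percolationMeasure d p).real (sectorEvent J m l D b)ᶜ ≤ η := by
  obtain ⟨k, hk⟩ : ∃ k : ℕ, 2 * 3 ^ d ≤ c * (k : ℝ) ^ d := by
    obtain ⟨k, hk⟩ := exists_nat_ge (2 * 3 ^ d / c + 1)
    have hk1 : (1 : ℝ) ≤ k := le_trans (le_add_of_nonneg_left (by positivity)) hk
    refine ⟨k, ((div_le_iff₀' hc).1 (by linarith)).trans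
      (mul_le_mul_of_nonneg_left (le_self_pow₀ hk1 (by omega)) hc.le)⟩
  refine ⟨k + 1, fun η hη => ?_⟩
  obtain ⟨m, hm⟩ := exists_forall_real_compl_exists_le_card_clusterIn_le hd p hδ h
    (pow_pos hη (Fintype.card (Direction d)))
  refine ⟨m, fun l hml hl D b => ?_⟩
  have hprod := prod_bernoulliProduct_real_compl_le p (Finset.univ : Finset (Direction d))
    (fun D => determinedBy_sectorEvent (k + 1) m l D 0)
    (fun D => isUpperSet_sectorEvent (k + 1) m l D 0)
  have heq (D' : Direction d) : (percolationMeasure d p).real (sectorEvent (k + 1) m l D' 0)ᶜ =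
      (percolationMeasure d p).real (sectorEvent (k + 1) m l D b)ᶜ := by
    rw [probReal_compl_eq_one_sub (determinedBy_sectorEvent ..).measurableSet,
      probReal_compl_eq_one_sub (determinedBy_sectorEvent ..).measurableSet,
      real_sectorEvent_eq p _ _ _ D' D 0 b]
  rw [Finset.prod_congr rfl fun D' _ => heq D', Finset.prod_const, Finset.card_univ] at hprod
  have : Nonempty (Direction d) := ⟨(⟨0, hd⟩, fun _ => 1)⟩
  refine le_of_pow_le_pow_left₀ Fintype.card_ne_zero hη.le (hprod.trans ?_)
  exact (measureReal_mono (Set.compl_subset_compl.2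
    (setOf_exists_le_card_clusterIn_subset hd hk hml hl))).trans (hm (k * l))

end Directions

/-! ### Renormalisation: cells and dense clusters -/

section Cells

variable {d : ℕ} {l r r' k J : ℕ} {u u' b x y v w : Vtx d} {ω ω' : Config d} {D : Direction d}

lemma mem_box_zero : y ∈ box x 0 ↔ y = x := by
  simp [mem_box, sub_eq_zero, funext_iff]

/-- The index `u` of the cell `∏ j, [l * u j, l * u j + l)` of side `l` which contains `y`. -/
def cellIndex (l : ℕ) (y : Vtx d) : Vtx d := fun j => y j / l

/-- The union of the cells of side `l` whose index lies in `box u r`. -/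
noncomputable def cellBlock (l : ℕ) (u : Vtx d) (r : ℕ) : Finset (Vtx d) :=
  Finset.Icc (fun j => l * (u j - r)) fun j => l * (u j + r) + l - 1

lemma mem_cellBlock (hl : 1 ≤ l) : y ∈ cellBlock l u r ↔ cellIndex l y ∈ box u r := by
  have hl' : (0 : ℤ) < l := by exact_mod_cast hl
  rw [cellBlock, Finset.mem_Icc, Pi.le_def, Pi.le_def, ← forall_and, mem_box]
  refine forall_congr' fun j => ?_
  have hlower : l * (u j - r) ≤ y j ↔ u j - r ≤ y j / l := by
    rw [Int.le_ediv_iff_mul_le hl', mul_comm]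
  have hupper : y j ≤ l * (u j + r) + l - 1 ↔ y j / l < u j + r + 1 := by
    rw [Int.ediv_lt_iff_lt_mul hl']
    constructor <;> intro h <;> nlinarith
  rw [hlower, hupper, cellIndex, abs_le]
  constructor <;> rintro ⟨h₁, h₂⟩ <;> constructor <;> linarith

lemma mem_cellBlock_zero (hl : 1 ≤ l) : y ∈ cellBlock l u 0 ↔ cellIndex l y = u := by
  rw [mem_cellBlock hl, mem_box_zero]

lemma card_cellBlock_zero (l : ℕ) (u : Vtx d) : (cellBlock l u 0).card = l ^ d := by
  simp [cellBlock, Pi.card_Icc]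

lemma cellBlock_subset_cellBlock (hl : 1 ≤ l) (h : u ∈ box u' k) (hr : r + k ≤ r') :
    cellBlock l u r ⊆ cellBlock l u' r' := fun _ hy =>
  (mem_cellBlock hl).2 (box_subset_box h hr ((mem_cellBlock hl).1 hy))

lemma cellBlock_mono (hl : 1 ≤ l) (u : Vtx d) (h : r ≤ r') : cellBlock l u r ⊆ cellBlock l u r' :=
  cellBlock_subset_cellBlock hl (self_mem_box u 0) h

lemma cellIndex_cellIndex (m n : ℕ) (y : Vtx d) :
    cellIndex n (cellIndex m y) = cellIndex (m * n) y := by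
  funext j
  simp only [cellIndex, Nat.cast_mul, Int.ediv_ediv_of_nonneg (Int.natCast_nonneg m)]

lemma cellIndex_mem_box (hl : 1 ≤ l) (h : y ∈ box b (J * l)) :
    cellIndex l y ∈ box (cellIndex l b) J := by
  have hl' : (0 : ℤ) < l := by exact_mod_cast hl
  refine mem_box.2 fun j => ?_
  have hj := abs_le.1 (mem_box.1 h j)
  push_cast at hj
  have hupper : y j / l ≤ (b j + J * l) / l := Int.ediv_le_ediv hl' (by linarith)
  have hlower : (b j + -J * l) / l ≤ y j / l := Int.ediv_le_ediv hl' (by linarith)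
  rw [Int.add_mul_ediv_right _ _ hl'.ne'] at hupper hlower
  exact abs_le.2 ⟨by simp only [cellIndex]; linarith, by simp only [cellIndex]; linarith⟩

lemma cellIndex_sub_mem_sector (hl : 1 ≤ l) (h : y - b ∈ sector l D) :
    cellIndex l y - cellIndex l b ∈ sector 0 D := by
  have hl' : (0 : ℤ) < l := by exact_mod_cast hl
  have hdiv (j : Fin d) (i : ℤ) (hi : i * l ≤ D.2 j * (y j - b j)) :
      i ≤ D.2 j * (y j / l - b j / l) := by
    rcases Int.units_eq_one_or (D.2 j) with hD | hD <;>
      simp only [hD, Units.val_neg, Units.val_one, neg_mul, one_mul] at hi ⊢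
    · have := Int.ediv_le_ediv hl' (show b j + i * l ≤ y j by linarith)
      rw [Int.add_mul_ediv_right _ _ hl'.ne'] at this
      linarith
    · have := Int.ediv_le_ediv hl' (show y j + i * l ≤ b j by linarith)
      rw [Int.add_mul_ediv_right _ _ hl'.ne'] at this
      linarith
  refine ⟨fun j => hdiv j 0 (by simpa using h.1 j), ?_⟩
  exact lt_of_lt_of_le (by simp) (hdiv D.1 1 (by simpa using h.2.le))

/-- The centre of the cell of side `2 * m + 1` with index `a`. -/
def cellCenter (m : ℕ) (a : Vtx d) : Vtx d := fun j => (2 * m + 1) * a j + m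

lemma cellBlock_zero_eq_box (m : ℕ) (a : Vtx d) :
    cellBlock (2 * m + 1) a 0 = box (cellCenter m a) m := by
  unfold cellBlock box cellCenter
  congr 1 <;> funext j <;> push_cast <;> ring

end Cells

section OpenBoxes

variable {d : ℕ} {ω : Config d} {lo hi x y : Vtx d}

lemma exists_adjV_sum_natAbs_lt (hx : x ∈ Finset.Icc lo hi) (hy : y ∈ Finset.Icc lo hi)
    (hxy : x ≠ y) :
    ∃ z ∈ Finset.Icc lo hi, adjV x z ∧ ∑ j, (z j - y j).natAbs < ∑ j, (x j - y j).natAbs := by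
  obtain ⟨i, hne⟩ := Function.ne_iff.1 hxy
  rw [Finset.mem_Icc] at hx hy
  obtain ⟨t, ht, hlo, hhi, hlt⟩ : ∃ t : ℤ, |x i - t| = 1 ∧ lo i ≤ t ∧ t ≤ hi i ∧
      (t - y i).natAbs < (x i - y i).natAbs := by
    have hxi : lo i ≤ x i ∧ x i ≤ hi i := ⟨hx.1 i, hx.2 i⟩
    have hyi : lo i ≤ y i ∧ y i ≤ hi i := ⟨hy.1 i, hy.2 i⟩
    rcases lt_or_gt_of_ne hne with h | h
    · exact ⟨x i + 1, by simp, by omega, by omega, by omega⟩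
    · exact ⟨x i - 1, by simp, by omega, by omega, by omega⟩
  refine ⟨Function.update x i t, Finset.mem_Icc.2 ⟨?_, ?_⟩, ?_, ?_⟩
  · exact le_update_iff.2 ⟨hlo, fun j _ => hx.1 j⟩
  · exact update_le_iff.2 ⟨hhi, fun j _ => hx.2 j⟩
  · rw [adjV, Finset.sum_eq_single i (fun j _ hj => by simp [hj]) (by simp), Function.update_self,
      ht]
  · refine Finset.sum_lt_sum (fun j _ => ?_) ⟨i, Finset.mem_univ i, by simpa using hlt⟩
    rcases eq_or_ne j i with rfl | hj
    · simpa using hlt.le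
    · simp [hj]

lemma connectedIn_Icc_of_forall_eq_true (hω : ∀ e ∈ (Finset.Icc lo hi).sym2, ω e = true)
    (hx : x ∈ Finset.Icc lo hi) (hy : y ∈ Finset.Icc lo hi) :
    ConnectedIn ω (Finset.Icc lo hi) x y := by
  induction hk : ∑ j, (x j - y j).natAbs using Nat.strong_induction_on generalizing x with
  | _ k ih =>
    rcases eq_or_ne x y with rfl | hxy
    · exact .refl ω _ x
    obtain ⟨z, hz, hadj, hlt⟩ := exists_adjV_sum_natAbs_lt hx hy hxy
    exact Relation.ReflTransGen.head
      ⟨hx, hz, hadj, hω _ (Finset.mk_mem_sym2_iff.2 ⟨hx, hz⟩)⟩ (ih _ (hk ▸ hlt) hz rfl)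

end OpenBoxes

section DenseClusters

variable {d : ℕ} {J l m n : ℕ} {b v v' x y : Vtx d} {ω ω' : Config d} {D : Direction d}

/-- The inverse of the density above which a cluster counts as dense in a cell. -/
def densityConst (d J : ℕ) : ℕ := Fintype.card (Direction d) * (2 * J + 1) ^ d

lemma densityConst_pos (hd : 1 ≤ d) (J : ℕ) : 0 < densityConst d J :=
  have : Nonempty (Direction d) := ⟨(⟨0, hd⟩, fun _ => 1)⟩
  Nat.mul_pos Fintype.card_pos (by positivity)

/-- The cluster of `v` in the cells at distance at most `2 * J` from its own cell is dense in the
cell of `v`. -/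
def InDenseCluster (J l : ℕ) (ω : Config d) (v : Vtx d) : Prop :=
  l ^ d ≤ densityConst d J *
    (clusterIn ω (cellBlock l (cellIndex l v) (2 * J)) v ∩ cellBlock l (cellIndex l v) 0).card

lemma InDenseCluster.mono (hω : ω ≤ ω') (h : InDenseCluster J l ω v) : InDenseCluster J l ω' v :=
  h.trans (Nat.mul_le_mul_left _ (Finset.card_le_card
    (Finset.inter_subset_inter_right (clusterIn_mono hω le_rfl v))))

lemma InDenseCluster.of_connectedIn (h : InDenseCluster J l ω v)
    (hvv' : ConnectedIn ω (cellBlock l (cellIndex l v) (2 * J)) v v')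
    (hv' : cellIndex l v' = cellIndex l v) : InDenseCluster J l ω v' := by
  unfold InDenseCluster at *
  rwa [hv', ← clusterIn_eq_of_connectedIn hvv']

lemma determinedBy_inDenseCluster (J l : ℕ) (v : Vtx d) :
    DeterminedBy {ω | InDenseCluster J l ω v} (cellBlock l (cellIndex l v) (2 * J)).sym2 :=
  fun ω ω' h => propext <| by
    change InDenseCluster J l ω v ↔ InDenseCluster J l ω' v
    rw [InDenseCluster, InDenseCluster, clusterIn_congr h]

/-- The event that `v` is connected to a vertex in a dense cluster whose cell lies in direction `D`
from the cell of `v`, at distance at most `J`. -/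
def moveEvent (J l : ℕ) (D : Direction d) (v : Vtx d) : Set (Config d) :=
  {ω | ∃ v', cellIndex l v' ∈ box (cellIndex l v) J ∧
    cellIndex l v' - cellIndex l v ∈ sector 0 D ∧ InDenseCluster J l ω v' ∧
    ConnectedIn ω (cellBlock l (cellIndex l v) (3 * J)) v v'}

lemma isUpperSet_moveEvent (J l : ℕ) (D : Direction d) (v : Vtx d) :
    IsUpperSet (moveEvent J l D v) := by
  rintro ω ω' hω ⟨v', hbox, hsector, hdense, hconn⟩
  exact ⟨v', hbox, hsector, hdense.mono hω, hconn.mono hω le_rfl⟩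

lemma determinedBy_moveEvent (hl : 1 ≤ l) (D : Direction d) (v : Vtx d) :
    DeterminedBy (moveEvent J l D v) (cellBlock l (cellIndex l v) (3 * J)).sym2 := by
  refine fun ω ω' h => propext <| exists_congr fun v' => and_congr_right fun hbox => ?_
  have hdense := ((determinedBy_inDenseCluster J l v').mono (Finset.sym2_mono
    (cellBlock_subset_cellBlock hl hbox (by omega)))).mem_iff h
  exact and_congr_right fun _ => and_congr hdense ⟨.congr h, .congr fun e he => (h e he).symm⟩

-- The vertices given by `sectorEvent` are spread over at most `(2 * J + 1) ^ d` cells, so one of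
-- these cells receives a positive fraction of them.
lemma exists_inDenseCluster_of_mem_sectorEvent (hl : 1 ≤ l) (h : ω ∈ sectorEvent J m l D b) :
    ∃ x ∈ box b m, ∃ v, cellIndex l v ∈ box (cellIndex l b) J ∧
      cellIndex l v - cellIndex l b ∈ sector 0 D ∧ InDenseCluster J l ω v ∧
      ConnectedIn ω (cellBlock l (cellIndex l b) J) x v := by
  classical
  obtain ⟨x, hx, hcard⟩ := h
  refine ⟨x, hx, ?_⟩
  set P := (clusterIn ω (box b (J * l)) x).filter fun y => y - b ∈ sector l D
  have hbox : box b (J * l) ⊆ cellBlock l (cellIndex l b) J := fun y hy =>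
    (mem_cellBlock hl).2 (cellIndex_mem_box hl hy)
  have hconn : ∀ y ∈ P, y ∈ box b (J * l) ∧ ConnectedIn ω (box b (J * l)) x y := fun y hy =>
    mem_clusterIn.1 (Finset.mem_filter.1 hy).1
  have hmaps : ∀ y ∈ P, cellIndex l y ∈ box (cellIndex l b) J := fun y hy =>
    cellIndex_mem_box hl (hconn y hy).1
  obtain ⟨u, hu, hfiber⟩ := Finset.exists_le_sum_fiber_of_maps_to_of_nsmul_le_sum hmaps
    ⟨_, self_mem_box _ J⟩ (w := fun _ => densityConst d J) (b := l ^ d) <| by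
      rw [card_box, Finset.sum_const, smul_eq_mul, smul_eq_mul, densityConst]
      linarith [Nat.mul_le_mul_left ((2 * J + 1) ^ d) hcard]
  rw [Finset.sum_const, smul_eq_mul, mul_comm] at hfiber
  obtain ⟨v, hv⟩ := Finset.card_pos.1
    (Nat.pos_of_mul_pos_left ((Nat.pow_pos hl).trans_le hfiber))
  obtain ⟨hvP, rfl⟩ := Finset.mem_filter.1 hv
  have hbox' : box b (J * l) ⊆ cellBlock l (cellIndex l v) (2 * J) :=
    hbox.trans (cellBlock_subset_cellBlock hl (mem_box_comm.1 hu) (by omega))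
  refine ⟨v, hu, cellIndex_sub_mem_sector hl (Finset.mem_filter.1 hvP).2,
    hfiber.trans (Nat.mul_le_mul_left _ (Finset.card_le_card fun y hy => ?_)),
    (hconn v hvP).2.mono le_rfl hbox⟩
  obtain ⟨hyP, hyv⟩ := Finset.mem_filter.1 hy
  exact Finset.mem_inter.2 ⟨mem_clusterIn.2 ⟨hbox' (hconn y hyP).1,
    ((hconn v hvP).2.symm.trans (hconn y hyP).2).mono le_rfl hbox'⟩, (mem_cellBlock_zero hl).2 hyv⟩

lemma forceOpen_mem_moveEvent (hl : 1 ≤ l) (hω : ω ∈ sectorEvent J m l D b)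
    (hb : box b m ⊆ cellBlock l (cellIndex l v) 0) (hy : y ∈ box b m)
    (hvy : ConnectedIn ω (cellBlock l (cellIndex l v) (2 * J)) v y) :
    forceOpen (box b m).sym2 ω ∈ moveEvent J l D v := by
  obtain ⟨x, hx, v', hbox, hsector, hdense, hconn⟩ := exists_inDenseCluster_of_mem_sectorEvent hl hω
  have hbv : cellIndex l b = cellIndex l v := (mem_cellBlock_zero hl).1 (hb (self_mem_box b m))
  rw [hbv] at hbox hsector hconn
  have hle := le_forceOpen (box b m).sym2 ω
  have hyx : ConnectedIn (forceOpen (box b m).sym2 ω) (box b m) y x :=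
    connectedIn_Icc_of_forall_eq_true (fun e he => forceOpen_of_mem he ω) hy hx
  refine ⟨v', hbox, hsector, hdense.mono hle, ?_⟩
  exact (hvy.mono hle (cellBlock_mono hl _ (by omega))).trans <|
    (hyx.mono le_rfl (hb.trans (cellBlock_mono hl _ (Nat.zero_le _)))).trans <|
      hconn.mono hle (cellBlock_mono hl _ (by omega))

lemma InDenseCluster.exists_touched_cells (hm : 1 ≤ m) (hn : 1 ≤ n)
    (h : InDenseCluster J (m * n) ω v) :
    ∃ A ⊆ cellBlock n (cellIndex (m * n) v) 0, n ^ d ≤ densityConst d J * A.card ∧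
      ∀ a ∈ A, ∃ y ∈ cellBlock m a 0,
        ConnectedIn ω (cellBlock (m * n) (cellIndex (m * n) v) (2 * J)) v y := by
  classical
  set C := clusterIn ω (cellBlock (m * n) (cellIndex (m * n) v) (2 * J)) v ∩
    cellBlock (m * n) (cellIndex (m * n) v) 0
  have hfiber : C.card ≤ m ^ d * (C.image (cellIndex m)).card :=
    Finset.card_le_mul_card_image C _ fun a _ => by
      rw [← card_cellBlock_zero m a]
      exact Finset.card_le_card fun y hy => (mem_cellBlock_zero hm).2 (Finset.mem_filter.1 hy).2
  refine ⟨C.image (cellIndex m), fun a ha => ?_, ?_, fun a ha => ?_⟩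
  · obtain ⟨y, hy, rfl⟩ := Finset.mem_image.1 ha
    rw [mem_cellBlock_zero hn, cellIndex_cellIndex]
    exact (mem_cellBlock_zero (Nat.mul_pos hm hn)).1 (Finset.mem_inter.1 hy).2
  · refine Nat.le_of_mul_le_mul_left (c := m ^ d) ?_ (Nat.pow_pos hm)
    calc m ^ d * n ^ d = (m * n) ^ d := (mul_pow m n d).symm
      _ ≤ densityConst d J * (m ^ d * (C.image (cellIndex m)).card) :=
        h.trans (Nat.mul_le_mul_left _ hfiber)
      _ = _ := by ring
  · obtain ⟨y, hy, rfl⟩ := Finset.mem_image.1 ha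
    exact ⟨y, (mem_cellBlock_zero hm).2 rfl, (mem_clusterIn.1 (Finset.mem_inter.1 hy).1).2⟩

end DenseClusters

/-! ### Dense clusters can move in every direction -/

section Moves

variable {d : ℕ} {J l m n : ℕ} {a b u v : Vtx d} {ω : Config d} {D : Direction d}

lemma cellIndex_cellCenter (m : ℕ) (a : Vtx d) : cellIndex (2 * m + 1) (cellCenter m a) = a := by
  rw [← mem_cellBlock_zero (by omega), cellBlock_zero_eq_box]
  exact self_mem_box _ m

lemma disjoint_box_cellCenter (m : ℕ) (hab : a ≠ b) :
    Disjoint (box (cellCenter m a) m) (box (cellCenter m b) m) := by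
  simp_rw [← cellBlock_zero_eq_box, Finset.disjoint_left,
    mem_cellBlock_zero (show 1 ≤ 2 * m + 1 by omega)]
  rintro y rfl
  exact hab

lemma box_cellCenter_subset_cellBlock (m : ℕ) (hn : 1 ≤ n) (ha : a ∈ cellBlock n u 0) :
    box (cellCenter m a) m ⊆ cellBlock ((2 * m + 1) * n) u 0 := by
  intro y hy
  rw [← cellBlock_zero_eq_box, mem_cellBlock_zero (by omega)] at hy
  rw [mem_cellBlock_zero hn] at ha
  rw [mem_cellBlock_zero (by nlinarith), ← cellIndex_cellIndex, hy, ha]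

open Classical in
/-- Among the cells of side `2 * m + 1` inside the cell `u` of side `(2 * m + 1) * n`, at least a
positive fraction is not adjacent to a directed large cluster. -/
def fewSectorsEvent (J m n : ℕ) (D : Direction d) (u : Vtx d) : Set (Config d) :=
  {ω | n ^ d < 2 * densityConst d J * ((cellBlock n u 0).filter fun a =>
    ω ∈ (sectorEvent J m ((2 * m + 1) * n) D (cellCenter m a))ᶜ).card}

open Classical in
lemma mem_fewSectorsEvent : ω ∈ fewSectorsEvent J m n D u ↔
    n ^ d < 2 * densityConst d J * ((cellBlock n u 0).filter fun a =>
      ω ∈ (sectorEvent J m ((2 * m + 1) * n) D (cellCenter m a))ᶜ).card := Iff.rfl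

lemma determinedBy_fewSectorsEvent (J m n : ℕ) (D : Direction d) (u : Vtx d) :
    DeterminedBy (fewSectorsEvent J m n D u) ((cellBlock n u 0).biUnion fun a =>
      (box (cellCenter m a) (J * ((2 * m + 1) * n))).sym2) := by
  refine fun ω ω' h => propext ?_
  classical
  have hfilter := Finset.filter_congr fun a ha => ((determinedBy_sectorEvent J m _ D
    (cellCenter m a)).compl.mono (Finset.subset_biUnion_of_mem (fun a =>
      (box (cellCenter m a) (J * ((2 * m + 1) * n))).sym2) ha)).mem_iff h
  change _ < _ * Finset.card _ ↔ _ < _ * Finset.card _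
  rw [hfilter]

lemma real_fewSectorsEvent_le (p : I) (hn : 1 ≤ n) {η : ℝ}
    (hη : ∀ b, (percolationMeasure d p).real (sectorEvent J m ((2 * m + 1) * n) D b)ᶜ ≤ η) :
    (percolationMeasure d p).real (fewSectorsEvent J m n D u) ≤ 2 * densityConst d J * η := by
  classical
  refine (measureReal_le_mul_of_card_le_mul_card (J := cellBlock n u 0) (K := 2 * densityConst d J)
    (B := fun a => (sectorEvent J m ((2 * m + 1) * n) D (cellCenter m a))ᶜ)
    (Finset.card_pos.1 ?_) (fun a => (determinedBy_sectorEvent J m _ D (cellCenter m a)).compl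
      |>.measurableSet) (fun ω hω => ?_) (q := η) ?_).trans_eq (by push_cast; rfl)
  · exact card_cellBlock_zero n u ▸ Nat.pow_pos hn
  · rw [card_cellBlock_zero]
    convert Nat.le_of_lt (mem_fewSectorsEvent.1 hω)
  · exact (Finset.sum_le_card_nsmul _ _ η fun a _ => hη _).trans_eq (nsmul_eq_mul _ _)

-- A dense cluster touches a positive fraction of the small cells of `u`. If it cannot move, then
-- each small cell which it touches and which is adjacent to a directed large cluster is pivotal.
lemma pow_le_card_pivotal (hn : 1 ≤ n) (hdense : InDenseCluster J ((2 * m + 1) * n) ω v)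
    (hmove : ω ∉ moveEvent J ((2 * m + 1) * n) D v)
    (hfew : ω ∉ fewSectorsEvent J m n D (cellIndex ((2 * m + 1) * n) v)) :
    open Classical in n ^ d ≤ 2 * densityConst d J *
      ((cellBlock n (cellIndex ((2 * m + 1) * n) v) 0).filter fun a =>
        ω ∈ forceOpen (box (cellCenter m a) m).sym2 ⁻¹' moveEvent J ((2 * m + 1) * n) D v \
          moveEvent J ((2 * m + 1) * n) D v).card := by
  classical
  obtain ⟨A, hA, hcard, htouch⟩ := hdense.exists_touched_cells (by omega) hn
  set u := cellIndex ((2 * m + 1) * n) v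
  have hfew' : 2 * densityConst d J * ((cellBlock n u 0).filter fun a =>
      ω ∈ (sectorEvent J m ((2 * m + 1) * n) D (cellCenter m a))ᶜ).card ≤ n ^ d := by
    by_contra h
    exact hfew (mem_fewSectorsEvent.2 (by convert not_le.1 h))
  have hcover : A ⊆ ((cellBlock n u 0).filter fun a =>
        ω ∈ (sectorEvent J m ((2 * m + 1) * n) D (cellCenter m a))ᶜ) ∪
      (cellBlock n u 0).filter fun a =>
        ω ∈ forceOpen (box (cellCenter m a) m).sym2 ⁻¹' moveEvent J ((2 * m + 1) * n) D v \
          moveEvent J ((2 * m + 1) * n) D v := by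
    intro a ha
    rw [← Finset.filter_or, Finset.mem_filter, or_iff_not_imp_left, Set.mem_compl_iff, not_not]
    refine ⟨hA ha, fun hsector => ⟨?_, hmove⟩⟩
    obtain ⟨y, hy, hvy⟩ := htouch a ha
    exact forceOpen_mem_moveEvent (by nlinarith) hsector
      (box_cellCenter_subset_cellBlock m hn (hA ha)) (cellBlock_zero_eq_box m a ▸ hy) hvy
  have := Nat.mul_le_mul_left (2 * densityConst d J)
    ((Finset.card_le_card hcover).trans (Finset.card_union_le _ _))
  linarith

lemma real_inDenseCluster_diff_moveEvent_le {p : I} (hp : 0 < (p : ℝ)) (hn : 1 ≤ n) (v : Vtx d) :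
    (percolationMeasure d p).real
        (({ω | InDenseCluster J ((2 * m + 1) * n) ω v} \ moveEvent J ((2 * m + 1) * n) D v) \
          fewSectorsEvent J m n D (cellIndex ((2 * m + 1) * n) v)) ≤
      2 * densityConst d J * ((p : ℝ) ^ ((2 * m + 1) ^ d + 1).choose 2 * √((n : ℝ) ^ d))⁻¹ := by
  classical
  set F := moveEvent J ((2 * m + 1) * n) D v
  set q := (p : ℝ) ^ ((2 * m + 1) ^ d + 1).choose 2
  have hdet : DeterminedBy F _ := determinedBy_moveEvent (by nlinarith) D v
  have hcard (u : Vtx d) : ((cellBlock n u 0).card : ℝ) = (n : ℝ) ^ d := by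
    rw [card_cellBlock_zero, Nat.cast_pow]
  have hpivotal := sum_bernoulliProduct_real_forceOpen_diff_le p
    (J := cellBlock n (cellIndex ((2 * m + 1) * n) v) 0)
    (S := fun a => (box (cellCenter m a) m).sym2)
    (fun a _ b _ hab => disjoint_sym2 (disjoint_box_cellCenter m hab)) hdet
    (isUpperSet_moveEvent J _ D v) (q := q) (by positivity)
    (fun a _ => by rw [Finset.card_sym2, card_box])
  refine (measureReal_le_mul_of_card_le_mul_card
    (J := cellBlock n (cellIndex ((2 * m + 1) * n) v) 0) (K := 2 * densityConst d J)
    (Finset.card_pos.1 (card_cellBlock_zero n _ ▸ Nat.pow_pos hn))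
    (fun a => ((hdet.preimage_forceOpen (box (cellCenter m a) m).sym2).measurableSet.diff
      hdet.measurableSet)) (fun ω hω => ?_) (q := (q * √((n : ℝ) ^ d))⁻¹) ?_).trans_eq
      (by push_cast; rfl)
  · rw [card_cellBlock_zero]
    convert pow_le_card_pivotal hn hω.1.1 hω.1.2 hω.2
  · refine hpivotal.trans_eq ?_
    rw [hcard, mul_inv, mul_left_comm, ← div_eq_mul_inv _ (√_), Real.div_sqrt, mul_comm,
      div_eq_mul_inv]

/-- Every vertex of the cell `u` lying in a dense cluster can move in direction `D`. -/
def mobileEvent (J l : ℕ) (D : Direction d) (u : Vtx d) : Set (Config d) :=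
  {ω | ∀ v, cellIndex l v = u → InDenseCluster J l ω v → ω ∈ moveEvent J l D v}

lemma determinedBy_mobileEvent (hl : 1 ≤ l) (D : Direction d) (u : Vtx d) :
    DeterminedBy (mobileEvent J l D u) (cellBlock l u (3 * J)).sym2 := by
  refine fun ω ω' h => propext <| forall_congr' fun v => ?_
  refine forall_congr' fun hv => ?_
  subst hv
  exact imp_congr (((determinedBy_inDenseCluster J l v).mono
    (Finset.sym2_mono (cellBlock_mono hl _ (by omega)))).mem_iff h)
    ((determinedBy_moveEvent hl D v).mem_iff h)

lemma notMem_moveEvent_of_connectedIn {v' : Vtx d} (hl : 1 ≤ l)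
    (hmove : ω ∉ moveEvent J l D v)
    (hvv' : ConnectedIn ω (cellBlock l (cellIndex l v) (2 * J)) v v')
    (hv' : cellIndex l v' = cellIndex l v) : ω ∉ moveEvent J l D v' := by
  rintro ⟨v'', hbox, hsector, hdense, hconn⟩
  rw [hv'] at hbox hsector hconn
  exact hmove ⟨v'', hbox, hsector, hdense,
    (hvv'.mono le_rfl (cellBlock_mono hl _ (by omega))).trans hconn⟩

-- If one dense cluster cannot move, then the same holds at all of its vertices, which are a
-- positive fraction of the cell; hence the union bound over the cell costs only a constant.
lemma real_compl_mobileEvent_le {p : I} (hp : 0 < (p : ℝ)) (hn : 1 ≤ n) {η : ℝ}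
    (hη : ∀ b, (percolationMeasure d p).real (sectorEvent J m ((2 * m + 1) * n) D b)ᶜ ≤ η) :
    (percolationMeasure d p).real (mobileEvent J ((2 * m + 1) * n) D u)ᶜ ≤
      2 * densityConst d J * η + densityConst d J * (2 * densityConst d J *
        ((p : ℝ) ^ ((2 * m + 1) ^ d + 1).choose 2 * √((n : ℝ) ^ d))⁻¹) := by
  classical
  set l := (2 * m + 1) * n with hl
  have hl1 : 1 ≤ l := by nlinarith
  set few := fewSectorsEvent J m n D u
  set stuck : Vtx d → Set (Config d) := fun v =>
    ({ω | InDenseCluster J l ω v} \ moveEvent J l D v) \ few with hstuck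
  have hmeas (v : Vtx d) : MeasurableSet (stuck v) :=
    ((determinedBy_inDenseCluster J l v).measurableSet.diff
      (determinedBy_moveEvent hl1 D v).measurableSet).diff
      (determinedBy_fewSectorsEvent J m n D u).measurableSet
  have hcluster : ∀ ω ∈ (mobileEvent J l D u)ᶜ \ few, (cellBlock l u 0).card ≤
      densityConst d J * ((cellBlock l u 0).filter fun v => ω ∈ stuck v).card := by
    rintro ω ⟨hω, hfew⟩
    obtain ⟨v, rfl, hdense, hmove⟩ : ∃ v, cellIndex l v = u ∧ InDenseCluster J l ω v ∧
        ω ∉ moveEvent J l D v := by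
      simpa only [mobileEvent, Set.mem_compl_iff, Set.mem_ofPred_eq, not_forall, exists_prop]
        using hω
    refine (card_cellBlock_zero l _).trans_le (hdense.trans
      (Nat.mul_le_mul_left _ (Finset.card_le_card fun v' hv' => ?_)))
    obtain ⟨hvv', hv'⟩ := Finset.mem_inter.1 hv'
    have hcell := (mem_cellBlock_zero hl1).1 hv'
    replace hvv' := (mem_clusterIn.1 hvv').2
    exact Finset.mem_filter.2 ⟨hv', ⟨hdense.of_connectedIn hvv' hcell,
      notMem_moveEvent_of_connectedIn hl1 hmove hvv' hcell⟩, hfew⟩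
  have hstuck_le := measureReal_le_mul_of_card_le_mul_card (μ := percolationMeasure d p)
    (Finset.card_pos.1 (card_cellBlock_zero l u ▸ Nat.pow_pos hl1)) hmeas
    (K := densityConst d J) (W := (mobileEvent J l D u)ᶜ \ few)
    (fun ω hω => by convert hcluster ω hω)
    ((Finset.sum_le_card_nsmul _ _ _ fun v hv => (mem_cellBlock_zero hl1).1 hv ▸
      real_inDenseCluster_diff_moveEvent_le hp hn v).trans_eq (nsmul_eq_mul _ _))
  refine (measureReal_mono (Set.subset_union_right.trans_eq Set.union_sdiff_self.symm)).trans
    ((measureReal_union_le few _).trans (add_le_add (real_fewSectorsEvent_le p hn hη) hstuck_le))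

/-- The event that some cell at distance at most `J` from the cell `u` meets a dense cluster. -/
def nearDenseEvent (J l : ℕ) (u : Vtx d) : Set (Config d) :=
  {ω | ∃ v, cellIndex l v ∈ box u J ∧ InDenseCluster J l ω v}

lemma determinedBy_nearDenseEvent (hl : 1 ≤ l) (u : Vtx d) :
    DeterminedBy (nearDenseEvent J l u) (cellBlock l u (3 * J)).sym2 := by
  refine fun ω ω' h => propext <| exists_congr fun v => and_congr_right fun hv => ?_
  exact ((determinedBy_inDenseCluster J l v).mono
    (Finset.sym2_mono (cellBlock_subset_cellBlock hl hv (by omega)))).mem_iff h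

lemma sectorEvent_subset_nearDenseEvent (hn : 1 ≤ n) (u : Vtx d) :
    sectorEvent J m ((2 * m + 1) * n) D (cellCenter m fun j => n * u j) ⊆
      nearDenseEvent J ((2 * m + 1) * n) u := by
  intro ω hω
  obtain ⟨-, -, v, hv, -, hdense, -⟩ := exists_inDenseCluster_of_mem_sectorEvent (by nlinarith) hω
  rw [← cellIndex_cellIndex, cellIndex_cellCenter] at hv
  refine ⟨v, ?_, hdense⟩
  convert hv using 2
  exact funext fun j => (Int.mul_ediv_cancel_left _ (by omega)).symm

lemma exists_mul_inv_mul_sqrt_pow_le (hd : 1 ≤ d) {q : ℝ} (hq : 0 < q) {K ε : ℝ}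
    (hε : 0 < ε) : ∃ n : ℕ, 1 ≤ n ∧ K * (q * √((n : ℝ) ^ d))⁻¹ ≤ ε := by
  have hlim : Tendsto (fun n : ℕ => K * (q * √((n : ℝ) ^ d))⁻¹) atTop (𝓝 0) := by
    simpa using ((Real.tendsto_sqrt_atTop.comp ((tendsto_pow_atTop (by omega : d ≠ 0)).comp
      tendsto_natCast_atTop_atTop)).const_mul_atTop hq).inv_tendsto_atTop.const_mul K
  exact ((eventually_ge_atTop 1).and (hlim.eventually (Iic_mem_nhds hε))).exists

lemma exists_forall_real_compl_mobileEvent_le (hd : 1 ≤ d) {p : I} (hp : 0 < (p : ℝ)) {c δ : ℝ}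
    (hc : 0 < c) (hδ : 0 < δ)
    (h : ∀ n, δ ≤ (percolationMeasure d p).real (volumeGrowthEvent d c n)) :
    ∃ J : ℕ, ∀ ε : ℝ, 0 < ε → ∃ l : ℕ, 1 ≤ l ∧
      (∀ (D : Direction d) u, (percolationMeasure d p).real (mobileEvent J l D u)ᶜ ≤ ε) ∧
      ∀ u, (percolationMeasure d p).real (nearDenseEvent J l u)ᶜ ≤ ε := by
  obtain ⟨J, hsector⟩ := exists_forall_real_compl_sectorEvent_le hd p hc hδ h
  refine ⟨J, fun ε hε => ?_⟩
  set K : ℝ := (densityConst d J : ℝ)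
  have hK : 1 ≤ K := Nat.one_le_cast.2 (densityConst_pos hd J)
  obtain ⟨m, hm⟩ := hsector (ε / (4 * K)) (by positivity)
  obtain ⟨n, hn, hnε⟩ := exists_mul_inv_mul_sqrt_pow_le (K := 2 * K * K) hd
    (pow_pos hp (((2 * m + 1) ^ d + 1).choose 2)) (half_pos hε)
  have hη := hm ((2 * m + 1) * n) (by nlinarith) (by nlinarith)
  refine ⟨(2 * m + 1) * n, by nlinarith, fun D u => ?_, fun u => ?_⟩
  · have hhalf : 2 * K * (ε / (4 * K)) = ε / 2 := by field_simp; norm_num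
    linarith [real_compl_mobileEvent_le (u := u) hp hn (hη D)]
  · have hD : Direction d := (⟨0, hd⟩, 1)
    refine (measureReal_mono (Set.compl_subset_compl.2
      (sectorEvent_subset_nearDenseEvent (D := hD) hn u))).trans ((hη _ _).trans ?_)
    exact div_le_self hε.le (by linarith)

end Moves

/-! ### Good sites -/

section GoodSites

variable {d : ℕ} {J l : ℕ} {u u' v v' z : Vtx d} {ω : Config d} {D : Direction d}

/-- The coarse-grained site `z` is good: from all cells slightly more than `J` away from `z` dense
clusters can move in all directions, and there is a dense cluster near `z`. -/
def goodSite (J l : ℕ) (z : Vtx d) : Set (Config d) :=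
  {ω | (∀ u ∈ box z (J + 1), ∀ D, ω ∈ mobileEvent J l D u) ∧ ω ∈ nearDenseEvent J l z}

lemma determinedBy_goodSite (hl : 1 ≤ l) (z : Vtx d) :
    DeterminedBy (goodSite J l z) (cellBlock l z (4 * J + 1)).sym2 := by
  refine fun ω ω' h => propext <| and_congr
    (forall₂_congr fun u hu => forall_congr' fun D => ?_) ?_
  · exact ((determinedBy_mobileEvent hl D u).mono
      (Finset.sym2_mono (cellBlock_subset_cellBlock hl hu (by omega)))).mem_iff h
  · exact ((determinedBy_nearDenseEvent hl z).mono
      (Finset.sym2_mono (cellBlock_mono hl z (by omega)))).mem_iff h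

lemma real_compl_goodSite_le {p : I} {ε : ℝ}
    (hmobile : ∀ (D : Direction d) u, (percolationMeasure d p).real (mobileEvent J l D u)ᶜ ≤ ε)
    (hnear : ∀ u, (percolationMeasure d p).real (nearDenseEvent (d := d) J l u)ᶜ ≤ ε)
    (z : Vtx d) :
    (percolationMeasure d p).real (goodSite J l z)ᶜ ≤
      ((2 * (J + 1) + 1) ^ d * Fintype.card (Direction d) + 1 : ℕ) * ε := by
  have hsub : (goodSite J l z)ᶜ ⊆
      (⋃ x ∈ box z (J + 1) ×ˢ (Finset.univ : Finset (Direction d)), (mobileEvent J l x.2 x.1)ᶜ) ∪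
        (nearDenseEvent J l z)ᶜ := by
    intro ω hω
    simp only [goodSite, Set.mem_compl_iff, Set.mem_ofPred_eq, not_and_or, not_forall] at hω
    refine hω.imp (fun ⟨u, hu, D, hD⟩ => ?_) id
    exact Set.mem_biUnion (x := (u, D)) (by simpa using hu) hD
  have hunion := (measureReal_biUnion_finset_le (μ := percolationMeasure d p)
    (box z (J + 1) ×ˢ (Finset.univ : Finset (Direction d)))
    fun x => (mobileEvent J l x.2 x.1)ᶜ).trans
      (Finset.sum_le_card_nsmul _ _ ε fun x _ => hmobile x.2 x.1)
  rw [Finset.card_product, card_box, Finset.card_univ, nsmul_eq_mul] at hunion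
  refine (measureReal_mono hsub).trans ((measureReal_union_le _ _).trans
    ((add_le_add hunion (hnear z)).trans_eq ?_))
  push_cast
  ring

/-- The translation that shifts the cells of side `l` by `z`. -/
def cellTranslation (l : ℕ) (z : Vtx d) : LatticeAut d := translation fun j => l * z j

lemma cellIndex_cellTranslation (hl : 1 ≤ l) (z y : Vtx d) :
    cellIndex l (cellTranslation l z y) = cellIndex l y + z :=
  funext fun j => Int.add_mul_ediv_left (y j) (z j) (by omega)

lemma map_cellBlock_cellTranslation (hl : 1 ≤ l) (z u : Vtx d) (r : ℕ) :
    (cellBlock l u r).map (cellTranslation l z).toEquiv.toEmbedding = cellBlock l (u + z) r := by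
  ext y
  obtain ⟨y, rfl⟩ := (cellTranslation l z).surjective y
  rw [apply_mem_map_latticeAut, mem_cellBlock hl, mem_cellBlock hl, cellIndex_cellTranslation hl,
    mem_box, mem_box]
  simp only [Pi.add_apply, add_sub_add_right_eq_sub]

lemma inDenseCluster_pullback (hl : 1 ≤ l) (z v : Vtx d) :
    InDenseCluster J l (pullback (cellTranslation l z) ω) v ↔
      InDenseCluster J l ω (cellTranslation l z v) := by
  rw [InDenseCluster, InDenseCluster, cellIndex_cellTranslation hl,
    ← map_cellBlock_cellTranslation hl, ← map_cellBlock_cellTranslation hl,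
    ← map_clusterIn_pullback, ← Finset.map_inter, Finset.card_map]

lemma add_mem_box_add : u + z ∈ box (u' + z) J ↔ u ∈ box u' J := by
  simp only [mem_box, Pi.add_apply, add_sub_add_right_eq_sub]

lemma pullback_mem_moveEvent (hl : 1 ≤ l) (z v : Vtx d) :
    pullback (cellTranslation l z) ω ∈ moveEvent J l D v ↔
      ω ∈ moveEvent J l D (cellTranslation l z v) := by
  rw [moveEvent, moveEvent, Set.mem_ofPred_eq, Set.mem_ofPred_eq]
  conv_rhs => rw [(cellTranslation l z).surjective.exists]
  simp only [cellIndex_cellTranslation hl, add_mem_box_add, add_sub_add_right_eq_sub,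
    inDenseCluster_pullback hl, connectedIn_pullback, map_cellBlock_cellTranslation hl]

lemma pullback_mem_mobileEvent (hl : 1 ≤ l) (z u : Vtx d) :
    pullback (cellTranslation l z) ω ∈ mobileEvent J l D u ↔ ω ∈ mobileEvent J l D (u + z) := by
  rw [mobileEvent, mobileEvent, Set.mem_ofPred_eq, Set.mem_ofPred_eq]
  conv_rhs => rw [(cellTranslation l z).surjective.forall]
  simp only [cellIndex_cellTranslation hl, add_left_inj, inDenseCluster_pullback hl,
    pullback_mem_moveEvent hl]

lemma pullback_mem_nearDenseEvent (hl : 1 ≤ l) (z u : Vtx d) :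
    pullback (cellTranslation l z) ω ∈ nearDenseEvent J l u ↔
      ω ∈ nearDenseEvent J l (u + z) := by
  rw [nearDenseEvent, nearDenseEvent, Set.mem_ofPred_eq, Set.mem_ofPred_eq]
  conv_rhs => rw [(cellTranslation l z).surjective.exists]
  simp only [cellIndex_cellTranslation hl, add_mem_box_add, inDenseCluster_pullback hl]

lemma preimage_pullback_goodSite (hl : 1 ≤ l) (z : Vtx d) :
    pullback (cellTranslation l z) ⁻¹' goodSite J l 0 = goodSite J l z := by
  ext ω
  have hsurj : Function.Surjective (· + z) := fun u => ⟨u - z, sub_add_cancel u z⟩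
  have hbox (u : Vtx d) : u + z ∈ box z (J + 1) ↔ u ∈ box 0 (J + 1) := by
    simpa only [zero_add] using add_mem_box_add (u' := 0)
  rw [Set.mem_preimage, goodSite, goodSite, Set.mem_ofPred_eq, Set.mem_ofPred_eq]
  conv_rhs => rw [hsurj.forall]
  simp only [pullback_mem_mobileEvent hl, pullback_mem_nearDenseEvent hl, zero_add, hbox]

lemma real_compl_goodSite_eq (p : I) (hl : 1 ≤ l) (z : Vtx d) :
    (percolationMeasure d p).real (goodSite J l z)ᶜ =
      (percolationMeasure d p).real (goodSite J l (0 : Vtx d))ᶜ := by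
  rw [← preimage_pullback_goodSite hl, ← Set.preimage_compl,
    percolationMeasure_real_preimage_pullback p _ (determinedBy_goodSite hl 0).compl.measurableSet]

/-- The coordinates in which `u` has distance more than `J` from `z`. -/
def farCoords (J : ℕ) (z u : Vtx d) : Finset (Fin d) :=
  Finset.univ.filter fun j => (J : ℤ) < |u j - z j|

lemma mem_farCoords {j : Fin d} : j ∈ farCoords J z u ↔ (J : ℤ) < |u j - z j| := by
  simp only [farCoords, Finset.mem_filter, Finset.mem_univ, true_and]

/-- The direction from `u` towards `z`, with main coordinate `i`. -/
def directionTowards (z u : Vtx d) (i : Fin d) : Direction d :=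
  (i, fun j => if z j ≤ u j then -1 else 1)

lemma abs_sub_le_max_of_sub_mem_sector {i : Fin d} (hbox : u' ∈ box u J)
    (hsector : u' - u ∈ sector 0 (directionTowards z u i)) (j : Fin d) :
    |u' j - z j| ≤ max (J : ℤ) |u j - z j| := by
  have hj := hsector.1 j
  have hJ := mem_box.1 hbox j
  simp only [directionTowards, Pi.sub_apply] at hj
  split_ifs at hj <;> simp at hj <;> grind

lemma abs_sub_le_of_sub_mem_sector {i : Fin d} (hu : u ∈ box z (J + 1)) (hbox : u' ∈ box u J)
    (hsector : u' - u ∈ sector 0 (directionTowards z u i)) : |u' i - z i| ≤ J := by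
  have hi := hsector.2
  have hJ := mem_box.1 hbox i
  have hJ' := mem_box.1 hu i
  simp only [directionTowards, Pi.sub_apply] at hi
  split_ifs at hi <;> simp at hi <;> grind

lemma farCoords_ssubset_of_sub_mem_sector {i : Fin d} (hu : u ∈ box z (J + 1))
    (hi : i ∈ farCoords J z u) (hbox : u' ∈ box u J)
    (hsector : u' - u ∈ sector 0 (directionTowards z u i)) :
    farCoords J z u' ⊂ farCoords J z u := by
  refine Finset.ssubset_iff_subset_ne.2 ⟨fun j hj => ?_, fun heq => ?_⟩
  · rw [mem_farCoords] at hj ⊢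
    have hmax := hj.trans_le (abs_sub_le_max_of_sub_mem_sector hbox hsector j)
    exact (lt_max_iff.1 hmax).resolve_left (lt_irrefl _)
  · rw [← heq, mem_farCoords] at hi
    exact hi.not_ge (abs_sub_le_of_sub_mem_sector hu hbox hsector)

-- Each move towards `z` along a far coordinate makes that coordinate close and no other one far.
lemma exists_inDenseCluster_of_goodSite (hgood : ω ∈ goodSite J l z)
    (hv : cellIndex l v ∈ box z (J + 1)) (hdense : InDenseCluster J l ω v) :
    ∃ v', cellIndex l v' ∈ box z J ∧ InDenseCluster J l ω v' ∧
      Relation.ReflTransGen (openAdj ω) v v' := by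
  induction hfar : farCoords J z (cellIndex l v) using Finset.strongInduction generalizing v with
  | H s ih =>
    subst hfar
    obtain hfar | ⟨i, hi⟩ := (farCoords J z (cellIndex l v)).eq_empty_or_nonempty
    · refine ⟨v, mem_box.2 fun j => not_lt.1 fun hj => ?_, hdense, .refl⟩
      exact Finset.notMem_empty j (hfar ▸ mem_farCoords.2 hj)
    obtain ⟨v', hbox, hsector, hdense', hconn⟩ :=
      hgood.1 _ hv (directionTowards z (cellIndex l v) i) v rfl hdense
    have hv' : cellIndex l v' ∈ box z (J + 1) := mem_box.2 fun j =>
      (abs_sub_le_max_of_sub_mem_sector hbox hsector j).trans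
        (max_le (by push_cast; linarith) (mem_box.1 hv j))
    obtain ⟨v'', hbox', hdense'', hconn'⟩ :=
      ih _ (farCoords_ssubset_of_sub_mem_sector hv hi hbox hsector) hv' hdense' rfl
    exact ⟨v'', hbox', hdense'', hconn.reflTransGen_openAdj.trans hconn'⟩

lemma exists_infinite_cluster_of_forall_goodSite {z : ℕ → Vtx d}
    (hz : ∀ k, z k ∈ box (z (k + 1)) 1) {i : Fin d} (hzi : ∀ k, z k i = k)
    (hgood : ∀ k, ω ∈ goodSite J l (z k)) :
    ∃ v, {x | Relation.ReflTransGen (openAdj ω) v x}.Infinite := by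
  obtain ⟨v₀, hv₀, hdense₀⟩ := (hgood 0).2
  have hpath (k : ℕ) : ∃ v, cellIndex l v ∈ box (z k) J ∧ InDenseCluster J l ω v ∧
      Relation.ReflTransGen (openAdj ω) v₀ v := by
    induction k with
    | zero => exact ⟨v₀, hv₀, hdense₀, .refl⟩
    | succ k ih =>
      obtain ⟨v, hv, hdense, hconn⟩ := ih
      obtain ⟨v', hv', hdense', hconn'⟩ := exists_inDenseCluster_of_goodSite (hgood (k + 1))
        (box_subset_box (hz k) le_rfl hv) hdense
      exact ⟨v', hv', hdense', hconn.trans hconn'⟩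
  choose v hv _ hconn using hpath
  refine ⟨v₀, fun hfin => ?_⟩
  have hbdd : BddAbove (Set.range fun k => cellIndex l (v k) i) :=
    (hfin.image fun x => cellIndex l x i).bddAbove.mono
      (by rintro _ ⟨k, rfl⟩; exact ⟨v k, hconn k, rfl⟩)
  obtain ⟨M, hM⟩ := hbdd
  have hlow := (abs_le.1 (mem_box.1 (hv (M.toNat + J + 1)) i)).1
  have hhigh := hM ⟨M.toNat + J + 1, rfl⟩
  rw [hzi] at hlow
  have := Int.self_le_toNat M
  push_cast at hlow
  simp only at hhigh
  linarith

end GoodSites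

/-! ### Lipschitz percolation -/

section Lipschitz

open ENNReal

variable {B : ℤ × ℤ → Prop} {Ω : Type*} [MeasurableSpace Ω] {μ : Measure Ω}
  {Bad : ℤ × ℤ → Set Ω} {r : ℝ≥0∞}

/-- The height `y` above `x` can be reached from the lower half-plane by vertical steps up into
sites of `B` and by diagonal steps down. The lowest heights that cannot be reached are the graph of
a Lipschitz function which avoids `B`. -/
inductive ReachableHeight (B : ℤ × ℤ → Prop) : ℤ → ℤ → Prop
  | base {x y : ℤ} (hy : y ≤ 0) : ReachableHeight B x y
  | up {x y : ℤ} (h : ReachableHeight B x y) (hB : B (x, y + 1)) : ReachableHeight B x (y + 1)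
  | left {x y : ℤ} (h : ReachableHeight B x y) : ReachableHeight B (x - 1) (y - 1)
  | right {x y : ℤ} (h : ReachableHeight B x y) : ReachableHeight B (x + 1) (y - 1)

lemma exists_lipschitz_of_forall_not_reachableHeight
    (h : ∀ x, ∃ n : ℕ, ¬ ReachableHeight B x n) :
    ∃ F : ℤ → ℤ, (∀ x, |F x - F (x + 1)| ≤ 1) ∧ ∀ x, ¬ B (x, F x) := by
  classical
  set F : ℤ → ℤ := fun x => (Nat.find (h x) : ℕ)
  have hnot (x : ℤ) : ¬ ReachableHeight B x (F x) := Nat.find_spec (h x)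
  have hbelow (x y : ℤ) (hy : y < F x) : ReachableHeight B x y := by
    obtain hy0 | hy0 := le_or_gt y 0
    · exact .base hy0
    · lift y to ℕ using hy0.le
      exact not_not.1 (Nat.find_min (h x) (Nat.cast_lt.1 hy))
  refine ⟨F, fun x => abs_le.2 ⟨?_, ?_⟩, fun x hB => ?_⟩
  · by_contra hlt
    refine hnot x ?_
    simpa only [add_sub_cancel_right] using
      (hbelow (x + 1) (F x + 1) (by linarith)).left
  · by_contra hlt
    refine hnot (x + 1) ?_
    simpa only [add_sub_cancel_right] using
      (hbelow x (F (x + 1) + 1) (by linarith)).right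
  · refine hnot x ?_
    simpa only [sub_add_cancel] using
      (hbelow x (F x - 1) (by linarith)).up (by simpa only [sub_add_cancel] using hB)

/-- The steps of `ReachableHeight`, traversed backwards. -/
def backStep : Fin 3 → ℤ × ℤ → ℤ × ℤ
  | 0, a => (a.1, a.2 - 1)
  | 1, a => (a.1 + 1, a.2 + 1)
  | 2, a => (a.1 - 1, a.2 + 1)

/-- The sites visited by the backward walk from `a` with steps `s`. -/
def walkSites : ℤ × ℤ → List (Fin 3) → List (ℤ × ℤ)
  | a, [] => [a]
  | a, i :: s => a :: walkSites (backStep i a) s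

/-- The sites which the backward walk from `a` with steps `s` leaves by a vertical step. -/
def walkDescents : ℤ × ℤ → List (Fin 3) → List (ℤ × ℤ)
  | _, [] => []
  | a, i :: s => if i = 0 then a :: walkDescents (backStep i a) s else walkDescents (backStep i a) s

/-- The last site of the backward walk from `a` with steps `s`. -/
def walkEnd : ℤ × ℤ → List (Fin 3) → ℤ × ℤ
  | a, [] => a
  | a, i :: s => walkEnd (backStep i a) s

lemma walkDescents_sublist (a : ℤ × ℤ) (s : List (Fin 3)) :
    (walkDescents a s).Sublist (walkSites a s) := by
  induction s generalizing a with
  | nil => exact List.nil_sublist _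
  | cons i s ih =>
    rw [walkDescents, walkSites]
    split_ifs
    · exact (ih _).cons_cons a
    · exact (ih _).cons a

lemma walkEnd_snd (a : ℤ × ℤ) (s : List (Fin 3)) :
    (walkEnd a s).2 = a.2 + s.length - 2 * (walkDescents a s).length := by
  induction s generalizing a with
  | nil => simp [walkEnd, walkDescents]
  | cons i s ih =>
    rw [walkDescents, walkEnd, ih]
    fin_cases i <;> simp [backStep] <;> ring

lemma exists_walk_of_mem_walkSites {a b : ℤ × ℤ} {s : List (Fin 3)} (hb : b ∈ walkSites a s) :
    ∃ t, (walkSites b t).Sublist (walkSites a s) ∧ walkDescents b t ⊆ walkDescents a s ∧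
      walkEnd b t = walkEnd a s := by
  induction s generalizing a with
  | nil =>
    obtain rfl := List.mem_singleton.1 hb
    exact ⟨[], .refl _, .refl _, rfl⟩
  | cons i s ih =>
    obtain rfl | hb := List.mem_cons.1 hb
    · exact ⟨i :: s, .refl _, .refl _, rfl⟩
    · obtain ⟨t, hsites, hdescents, hend⟩ := ih hb
      refine ⟨t, hsites.cons a, fun b hb => ?_, hend⟩
      replace hb := hdescents hb
      rw [walkDescents]
      split_ifs
      · exact List.mem_cons_of_mem a hb
      · exact hb

/-- A self-avoiding backward walk from `a` to the lower half-plane whose descents start in `B`. -/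
def HasDescendingWalk (B : ℤ × ℤ → Prop) (a : ℤ × ℤ) : Prop :=
  ∃ s, (walkSites a s).Nodup ∧ (∀ b ∈ walkDescents a s, B b) ∧ (walkEnd a s).2 ≤ 0

lemma HasDescendingWalk.of_backStep {a : ℤ × ℤ} (i : Fin 3) (h : HasDescendingWalk B (backStep i a))
    (hi : i = 0 → B a) : HasDescendingWalk B a := by
  obtain ⟨s, hnodup, hB, hend⟩ := h
  by_cases ha : a ∈ walkSites (backStep i a) s
  · obtain ⟨t, hsites, hdescents, hend'⟩ := exists_walk_of_mem_walkSites ha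
    exact ⟨t, hnodup.sublist hsites, fun b hb => hB b (hdescents hb), hend' ▸ hend⟩
  · refine ⟨i :: s, List.nodup_cons.2 ⟨ha, hnodup⟩, fun b hb => ?_, hend⟩
    rw [walkDescents] at hb
    split_ifs at hb with hi0
    · obtain rfl | hb := List.mem_cons.1 hb
      · exact hi hi0
      · exact hB b hb
    · exact hB b hb

lemma ReachableHeight.hasDescendingWalk {x y : ℤ} (h : ReachableHeight B x y) :
    HasDescendingWalk B (x, y) := by
  induction h with
  | base hy => exact ⟨[], List.nodup_singleton _, by simp [walkDescents], hy⟩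
  | up _ hB ih => exact .of_backStep 0 (by simpa [backStep] using ih) fun _ => hB
  | left _ ih => exact .of_backStep 1 (by simpa [backStep] using ih) (by simp)
  | right _ ih => exact .of_backStep 2 (by simpa [backStep] using ih) (by simp)

lemma measure_forall_mem_walkDescents_le
    (h : ∀ S : Finset (ℤ × ℤ), μ (⋂ z ∈ S, Bad z) ≤ r ^ (2 * S.card)) (hr : r ≤ 1)
    (x : ℤ) (n : ℕ) (s : List (Fin 3)) :
    μ {ω | (walkSites (x, n) s).Nodup ∧ (∀ b ∈ walkDescents (x, n) s, ω ∈ Bad b) ∧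
      (walkEnd (x, n) s).2 ≤ 0} ≤ r ^ (n + s.length) := by
  by_cases hs : (walkSites (x, n) s).Nodup ∧ (walkEnd (x, n) s).2 ≤ 0
  · obtain ⟨hnodup, hend⟩ := hs
    have hlength : n + s.length ≤ 2 * (walkDescents (x, n) s).length := by
      rw [walkEnd_snd] at hend
      linarith
    calc _ ≤ μ (⋂ z ∈ (walkDescents (x, n) s).toFinset, Bad z) :=
          measure_mono fun ω hω => by simpa using hω.2.1
      _ ≤ r ^ (2 * (walkDescents (x, n) s).toFinset.card) := h _
      _ ≤ r ^ (n + s.length) := by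
          rw [List.toFinset_card_of_nodup (hnodup.sublist (walkDescents_sublist _ s))]
          exact pow_le_pow_of_le_one zero_le hr hlength
  · refine (measure_mono_null (fun ω hω => hs ⟨hω.1, hω.2.2⟩) (measure_empty (μ := μ))).trans_le ?_
    exact zero_le

lemma measure_reachableHeight_le
    (h : ∀ S : Finset (ℤ × ℤ), μ (⋂ z ∈ S, Bad z) ≤ r ^ (2 * S.card)) (hr : r ≤ 1)
    (x : ℤ) (n : ℕ) :
    μ {ω | ReachableHeight (fun z => ω ∈ Bad z) x n} ≤ r ^ n * (1 - 3 * r)⁻¹ := by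
  have hsub : {ω | ReachableHeight (fun z => ω ∈ Bad z) x n} ⊆ ⋃ T : ℕ, ⋃ s : Fin T → Fin 3,
      {ω | (walkSites (x, n) (List.ofFn s)).Nodup ∧
        (∀ b ∈ walkDescents (x, n) (List.ofFn s), ω ∈ Bad b) ∧
        (walkEnd (x, n) (List.ofFn s)).2 ≤ 0} := by
    intro ω hω
    obtain ⟨s, hs⟩ := ReachableHeight.hasDescendingWalk hω
    refine Set.mem_iUnion₂.2 ⟨s.length, s.get, ?_⟩
    rwa [Set.mem_ofPred_eq, List.ofFn_get]
  have hlength (T : ℕ) : ∑ _s : Fin T → Fin 3, r ^ (n + T) = r ^ n * (3 * r) ^ T := by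
    rw [Finset.sum_const, Finset.card_univ, Fintype.card_fun, Fintype.card_fin, Fintype.card_fin,
      nsmul_eq_mul, pow_add, mul_pow]
    push_cast
    ring
  calc _ ≤ _ := measure_mono hsub
    _ ≤ ∑' T : ℕ, μ (⋃ s : Fin T → Fin 3, _) := measure_iUnion_le _
    _ ≤ ∑' T : ℕ, r ^ n * (3 * r) ^ T := ENNReal.tsum_le_tsum fun T => by
        rw [← hlength]
        refine (measure_iUnion_fintype_le μ _).trans (Finset.sum_le_sum fun s _ => ?_)
        simpa only [List.length_ofFn] using
          measure_forall_mem_walkDescents_le h hr x n (List.ofFn s)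
    _ = r ^ n * (1 - 3 * r)⁻¹ := by rw [ENNReal.tsum_mul_left, ENNReal.tsum_geometric]

-- Each reachable height `n` is witnessed by a self-avoiding walk with more than `n` bad descents.
theorem ae_exists_lipschitz_forall_notMem
    (h : ∀ S : Finset (ℤ × ℤ), μ (⋂ z ∈ S, Bad z) ≤ r ^ (2 * S.card)) (hr : 3 * r < 1) :
    ∀ᵐ ω ∂μ, ∃ F : ℤ → ℤ, (∀ x, |F x - F (x + 1)| ≤ 1) ∧ ∀ x, ω ∉ Bad (x, F x) := by
  have hr1 : r < 1 := (le_mul_of_one_le_left zero_le (by norm_num)).trans_lt hr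
  have hbounded (x : ℤ) : ∀ᵐ ω ∂μ, ∃ n : ℕ, ¬ ReachableHeight (fun z => ω ∈ Bad z) x n := by
    have hlim : Tendsto (fun n : ℕ => r ^ n * (1 - 3 * r)⁻¹) atTop (𝓝 0) := by
      simpa using ENNReal.Tendsto.mul_const (ENNReal.tendsto_pow_atTop_nhds_zero_of_lt_one hr1)
        (Or.inr (ENNReal.inv_ne_top.2 (tsub_pos_of_lt hr).ne'))
    refine ae_iff.2 (le_antisymm (ge_of_tendsto' hlim fun n => ?_) zero_le)
    refine (measure_mono fun ω hω => ?_).trans (measure_reachableHeight_le h hr1.le x n)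
    exact not_not.1 (not_exists.1 hω n)
  filter_upwards [ae_all_iff.2 hbounded] with ω hω
  exact exists_lipschitz_of_forall_not_reachableHeight hω

end Lipschitz

/-! ### Percolation of good sites -/

section Coloring

variable {E ι κ : Type*}

lemma bernoulliProduct_real_biInter_le_pow_card (p : I) [Fintype κ] [Nonempty κ] (f : ι → κ)
    {T : ι → Finset E} (hT : ∀ i j, i ≠ j → f i = f j → Disjoint (T i) (T j))
    {B : ι → Set (E → Bool)} (hB : ∀ i, DeterminedBy (B i) (T i)) {r : ℝ} (hr₀ : 0 ≤ r)
    (hr₁ : r ≤ 1) (hr : ∀ i, (bernoulliProduct E p).real (B i) ≤ r ^ Fintype.card κ)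
    (S : Finset ι) : (bernoulliProduct E p).real (⋂ i ∈ S, B i) ≤ r ^ S.card := by
  classical
  obtain ⟨y, -, hy⟩ := Finset.exists_le_card_fiber_of_nsmul_le_card_of_maps_to
    (s := S) (t := Finset.univ) (f := f) (b := (S.card / Fintype.card κ : ℚ))
    (fun _ _ => Finset.mem_univ _) Finset.univ_nonempty
    (by rw [Finset.card_univ, nsmul_eq_mul, mul_div_cancel₀ _ (by positivity)])
  set S' := S.filter fun i => f i = y with hS'
  have hcard : S.card ≤ Fintype.card κ * S'.card := by
    rw [div_le_iff₀' (by positivity)] at hy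
    exact_mod_cast hy
  have hdisj : (S' : Set ι).PairwiseDisjoint T := fun i hi j hj hij =>
    hT i j hij ((Finset.mem_filter.1 hi).2.trans (Finset.mem_filter.1 hj).2.symm)
  calc (bernoulliProduct E p).real (⋂ i ∈ S, B i)
      ≤ (bernoulliProduct E p).real (⋂ i ∈ S', B i) :=
        measureReal_mono (Set.biInter_subset_biInter_left (Finset.filter_subset _ S))
    _ = ∏ i ∈ S', (bernoulliProduct E p).real (B i) := bernoulliProduct_real_biInter p hdisj hB
    _ ≤ ∏ _i ∈ S', r ^ Fintype.card κ :=
        Finset.prod_le_prod (fun _ _ => measureReal_nonneg) fun i _ => hr i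
    _ = r ^ (Fintype.card κ * S'.card) := by rw [Finset.prod_const, ← pow_mul]
    _ ≤ r ^ S.card := pow_le_pow_of_le_one hr₀ hr₁ hcard

end Coloring

section Planar

variable {d : ℕ} {J l : ℕ}

/-- The embedding of the plane into the span of the first two coordinate directions. -/
def planeEmbedding (d : ℕ) (z : ℤ × ℤ) : Vtx d := fun j =>
  if (j : ℕ) = 0 then z.1 else if (j : ℕ) = 1 then z.2 else 0

lemma disjoint_cellBlock_planeEmbedding (hd : 2 ≤ d) (hl : 1 ≤ l) {r : ℕ} {a b : ℤ × ℤ}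
    (hab : a ≠ b) (h₁ : (a.1 : ZMod (2 * r + 1)) = b.1) (h₂ : (a.2 : ZMod (2 * r + 1)) = b.2) :
    Disjoint (cellBlock l (planeEmbedding d a) r) (cellBlock l (planeEmbedding d b) r) := by
  refine Finset.disjoint_left.2 fun y hya hyb => hab ?_
  rw [mem_cellBlock hl, mem_box] at hya hyb
  have hdist (j : Fin d) : |planeEmbedding d a j - planeEmbedding d b j| < (2 * r + 1 : ℕ) := by
    have := abs_le.1 (hya j)
    have := abs_le.1 (hyb j)
    refine abs_lt.2 ⟨?_, ?_⟩ <;> push_cast <;> linarith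
  have heq {s t : ℤ} (hst : (s : ZMod (2 * r + 1)) = t) (hlt : |s - t| < (2 * r + 1 : ℕ)) :
      s = t := sub_eq_zero.1 (Int.eq_zero_of_abs_lt_dvd
    ((ZMod.intCast_eq_intCast_iff_dvd_sub t s _).1 hst.symm) hlt)
  exact Prod.ext (heq h₁ (hdist ⟨0, by omega⟩)) (heq h₂ (hdist ⟨1, by omega⟩))

lemma percolationMeasure_biInter_compl_goodSite_le (hd : 2 ≤ d) {p : I} (hl : 1 ≤ l)
    (h : (percolationMeasure d p).real (goodSite J l (0 : Vtx d))ᶜ ≤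
      (1 / 16 : ℝ) ^ (2 * (4 * J + 1) + 1) ^ 2) (S : Finset (ℤ × ℤ)) :
    percolationMeasure d p (⋂ z ∈ S, (goodSite J l (planeEmbedding d z))ᶜ) ≤
      (4⁻¹ : ENNReal) ^ (2 * S.card) := by
  set R := 2 * (4 * J + 1) + 1
  have hreal := bernoulliProduct_real_biInter_le_pow_card p
    (fun z : ℤ × ℤ => ((z.1 : ZMod R), (z.2 : ZMod R)))
    (fun a b hab hf => disjoint_sym2 (disjoint_cellBlock_planeEmbedding hd hl hab
      (congrArg Prod.fst hf) (congrArg Prod.snd hf)))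
    (fun z => (determinedBy_goodSite (J := J) hl (planeEmbedding d z)).compl)
    (r := 1 / 16) (by norm_num) (by norm_num) (fun z => ?_) S
  · rw [← ofReal_measureReal]
    refine (ENNReal.ofReal_le_ofReal hreal).trans_eq ?_
    rw [ENNReal.ofReal_pow (by norm_num), pow_mul, one_div, ENNReal.ofReal_inv_of_pos (by norm_num),
      ← ENNReal.inv_pow (n := 2), ENNReal.ofReal_ofNat]
    norm_num only
  · rw [real_compl_goodSite_eq p hl, Fintype.card_prod, ZMod.card, ← sq]
    exact h

lemma ae_exists_infinite_cluster_of_goodSite (hd : 2 ≤ d) {p : I} (hl : 1 ≤ l)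
    (h : (percolationMeasure d p).real (goodSite J l (0 : Vtx d))ᶜ ≤
      (1 / 16 : ℝ) ^ (2 * (4 * J + 1) + 1) ^ 2) :
    ∀ᵐ ω ∂percolationMeasure d p, ∃ v, {x | Relation.ReflTransGen (openAdj ω) v x}.Infinite := by
  filter_upwards [ae_exists_lipschitz_forall_notMem
    (percolationMeasure_biInter_compl_goodSite_le hd hl h)
    (ENNReal.div_lt_of_lt_mul (by norm_num))] with ω ⟨F, hF, hgood⟩
  refine exists_infinite_cluster_of_forall_goodSite
    (z := fun k : ℕ => planeEmbedding d (k, F k)) (i := ⟨0, by omega⟩) (fun k => ?_)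
    (fun k => rfl) fun k => not_not.1 (hgood k)
  refine mem_box.2 fun j => ?_
  simp only [planeEmbedding]
  split_ifs
  · simp
  · simpa using hF k
  · simp

lemma mem_image_cluster_pullback_translation {ω : Config d} {v x : Vtx d}
    (hx : Relation.ReflTransGen (openAdj ω) v x) :
    x ∈ translation v '' cluster (pullback (translation v) ω) := by
  refine ⟨(translation v).symm x, ?_, (translation v).apply_symm_apply x⟩
  have hv : (translation v).symm v = 0 :=
    (translation v).symm_apply_eq.2 (zero_add v).symm
  rw [cluster, Set.mem_ofPred_eq, ← hv]
  refine Relation.ReflTransGen.lift (translation v).symm (fun a b hab => ?_) v x hx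
  rw [Function.onFun, openAdj_pullback, RelIso.apply_symm_apply, RelIso.apply_symm_apply]
  exact hab

lemma measure_infinite_cluster_pos_of_ae_exists {p : I}
    (h : ∀ᵐ ω ∂percolationMeasure d p,
      ∃ v, {x | Relation.ReflTransGen (openAdj ω) v x}.Infinite) :
    0 < percolationMeasure d p {ω | (cluster ω).Infinite} := by
  refine pos_iff_ne_zero.2 fun hzero => ?_
  have hvertex (v : Vtx d) : ∀ᵐ ω ∂percolationMeasure d p,
      ¬ {x | Relation.ReflTransGen (openAdj ω) v x}.Infinite := by
    have hpull : ∀ᵐ ω ∂percolationMeasure d p,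
        ¬ (cluster (pullback (translation v) ω)).Infinite :=
      (measurePreserving_pullback p (translation v)).quasiMeasurePreserving.ae
        (measure_eq_zero_iff_ae_notMem.1 hzero)
    filter_upwards [hpull] with ω hω hinf
    exact hω (Set.Infinite.of_image (translation v)
      (hinf.mono fun x hx => mem_image_cluster_pullback_translation hx))
  obtain ⟨ω, ⟨v, hv⟩, hω⟩ := (h.and (ae_all_iff.2 hvertex)).exists
  exact hω v hv

end Planar

/-! ### The critical point -/

section Critical

variable {d : ℕ}

lemma isBernoulli_percolationMeasure (d : ℕ) (p : I) :
    IsBernoulli (percolationMeasure d p) (p : ℝ) :=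
  ⟨inferInstance, bernoulliProduct_forall_mem_eq p⟩

lemma IsBernoulli.mem_unitInterval {μ : Measure (Config d)} {p : ℝ} (hμ : IsBernoulli μ p) :
    p ∈ I := by
  have := hμ.1
  have hedge (b : Bool) : (if b then ENNReal.ofReal p else ENNReal.ofReal (1 - p)) ≤ 1 := by
    simpa only [Finset.prod_singleton] using
      (hμ.2 {s(0, 0)} fun _ => b).symm.trans_le prob_le_one
  have htrue := ENNReal.ofReal_le_one.1 (hedge true)
  have hfalse := ENNReal.ofReal_le_one.1 (hedge false)
  exact ⟨by linarith, htrue⟩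

lemma IsBernoulli.eq_percolationMeasure {μ : Measure (Config d)} {p : ℝ} (hμ : IsBernoulli μ p) :
    μ = percolationMeasure d ⟨p, hμ.mem_unitInterval⟩ :=
  eq_bernoulliProduct hμ.2

lemma pcrit_le_of_measure_infinite_cluster_pos {p : I}
    (h : 0 < percolationMeasure d p {ω | (cluster ω).Infinite}) : pcrit d ≤ p :=
  csInf_le ⟨0, fun _ hq => hq.1⟩ ⟨p.2.1, p.2.2, _, isBernoulli_percolationMeasure d p, h⟩

lemma clusterIn_subset_singleton_of_forall_closed {ω : Config d} {D : Finset (Vtx d)}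
    (hω : ∀ e ∈ D.sym2, ω e = false) (x : Vtx d) : clusterIn ω D x ⊆ {x} := by
  refine fun y hy => Finset.mem_singleton.2 ?_
  obtain rfl | ⟨b, -, hb, hy, -, hopen⟩ := (mem_clusterIn.1 hy).2.cases_tail
  · rfl
  · exact absurd hopen (by simp [hω _ (Finset.mk_mem_sym2_iff.2 ⟨hb, hy⟩)])

lemma pos_of_forall_le_real_volumeGrowthEvent (hd : 1 ≤ d) {p : I} {c δ : ℝ} (hc : 0 < c)
    (hδ : 0 < δ) (h : ∀ n, δ ≤ (percolationMeasure d p).real (volumeGrowthEvent d c n)) :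
    0 < (p : ℝ) := by
  refine p.2.1.lt_of_ne' fun hp => ?_
  obtain ⟨N, hN⟩ : ∃ N : ℕ, 1 < c * (N : ℝ) ^ d := by
    have hlim := ((tendsto_pow_atTop (by omega : d ≠ 0)).comp
      (tendsto_natCast_atTop_atTop (R := ℝ))).const_mul_atTop hc
    exact (hlim.eventually_gt_atTop 1).exists
  have hclosed : (percolationMeasure d p).real
      {ω | ∀ e ∈ (box (0 : Vtx d) N).sym2, ω e = false}ᶜ = 0 := by
    rw [probReal_compl_eq_one_sub (determinedBy_forall_mem_eq _ _).measurableSet, measureReal_def,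
      bernoulliProduct_forall_mem_eq p _ fun _ => false]
    simp [hp]
  refine hδ.not_ge ((h N).trans ((measureReal_mono fun ω hω hall => ?_).trans_eq hclosed))
  have hcard := Finset.card_le_card (clusterIn_subset_singleton_of_forall_closed hall 0)
  rw [Finset.card_singleton] at hcard
  exact (hN.trans_le (hω N le_rfl)).not_ge (Nat.cast_le_one.2 hcard)

theorem pcrit_lt_of_measure_forall_le_mul_anchoredProfile_ne_zero (hd : 2 ≤ d) {p : I} {c : ℝ}
    (hc : 0 < c) {n₀ : ℕ} (h : percolationMeasure d p
      {ω | ∀ n : ℕ, n₀ ≤ n → c ≤ n * anchoredProfile ω n} ≠ 0) : pcrit d < p := by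
  obtain ⟨c₁, hc₁, hvolume⟩ := exists_forall_mul_pow_le_card_clusterIn (one_le_two.trans hd) hc n₀
  have hδ := ENNReal.toReal_pos h (measure_ne_top _ _)
  have hgrowth (n : ℕ) : (percolationMeasure d p).real
      {ω | ∀ n : ℕ, n₀ ≤ n → c ≤ n * anchoredProfile ω n} ≤
        (percolationMeasure d p).real (volumeGrowthEvent d c₁ n) :=
    measureReal_mono fun ω hω N _ => hvolume ω hω N
  have hp := pos_of_forall_le_real_volumeGrowthEvent (one_le_two.trans hd) hc₁ hδ hgrowth
  obtain ⟨J, hJ⟩ := exists_forall_real_compl_mobileEvent_le (one_le_two.trans hd) hp hc₁ hδ hgrowth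
  set M : ℕ := (2 * (J + 1) + 1) ^ d * Fintype.card (Direction d) + 1 with hM
  set t : ℝ := (1 / 16 : ℝ) ^ (2 * (4 * J + 1) + 1) ^ 2
  have ht0 : 0 < t := by positivity
  obtain ⟨l, hl, hmobile, hnear⟩ := hJ (t / 2 / M) (by positivity)
  have hgood : (percolationMeasure d p).real (goodSite J l (0 : Vtx d))ᶜ < t := by
    refine (real_compl_goodSite_le hmobile hnear 0).trans_lt ?_
    rw [← hM, mul_div_cancel₀ _ (by positivity)]
    exact half_lt_self ht0
  obtain ⟨p', hp', hgood'⟩ :=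
    (determinedBy_goodSite hl 0).compl.exists_lt_bernoulliProduct_real_lt hp hgood
  refine (pcrit_le_of_measure_infinite_cluster_pos ?_).trans_lt (Subtype.coe_lt_coe.2 hp')
  exact measure_infinite_cluster_pos_of_ae_exists
    (ae_exists_infinite_cluster_of_goodSite hd hl hgood'.le)

lemma anchoredProfile_nonneg (ω : Config d) (n : ℕ) : 0 ≤ anchoredProfile ω n := by
  refine Real.sInf_nonneg ?_
  rintro _ ⟨H, -, -, -, -, -, rfl⟩
  positivity

lemma exists_forall_one_div_le_of_liminf_ne_zero {f : ℕ → ℝ} (hf : ∀ n, 0 ≤ f n)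
    (h : liminf f atTop ≠ 0) :
    ∃ k n₀ : ℕ, ∀ n, n₀ ≤ n → 1 / ((k : ℝ) + 1) ≤ f n := by
  have hpos : ∃ a > 0, ∀ᶠ n in atTop, a ≤ f n := by
    by_contra hcon
    have hub : IsGreatest {a | ∀ᶠ n in atTop, a ≤ f n} 0 :=
      ⟨.of_forall hf, fun a ha => not_lt.1 fun ha0 => hcon ⟨a, ha0, ha⟩⟩
    exact h (liminf_eq.trans hub.csSup_eq)
  obtain ⟨a, ha, hfa⟩ := hpos
  obtain ⟨k, hk⟩ := exists_nat_one_div_lt ha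
  obtain ⟨n₀, hn₀⟩ := eventually_atTop.1 hfa
  exact ⟨k, n₀, fun n hn => hk.le.trans (hn₀ n hn)⟩

theorem liminf_anchored_profile_at_pc_general (d : ℕ) (hd : 2 ≤ d) (p : ℝ) (hp : p ≤ pcrit d)
    (μ : Measure (Config d)) (hμ : IsBernoulli μ p) :
    μ {ω | liminf (fun n : ℕ => (n : ℝ) * anchoredProfile ω n) atTop = 0} = 1 := by
  have := hμ.1
  have hnull (k n₀ : ℕ) :
      ∀ᵐ ω ∂μ, ¬ ∀ n : ℕ, n₀ ≤ n → 1 / ((k : ℝ) + 1) ≤ n * anchoredProfile ω n := by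
    rw [hμ.eq_percolationMeasure]
    refine measure_eq_zero_iff_ae_notMem.1 (by_contra fun h => ?_)
    exact hp.not_gt (pcrit_lt_of_measure_forall_le_mul_anchoredProfile_ne_zero hd (by positivity) h)
  refine (measure_congr (eventuallyEq_univ.2 ?_)).trans measure_univ
  filter_upwards [ae_all_iff.2 fun k => ae_all_iff.2 (hnull k)] with ω hω
  by_contra hne
  obtain ⟨k, n₀, h⟩ := exists_forall_one_div_le_of_liminf_ne_zero
    (fun n => mul_nonneg n.cast_nonneg (anchoredProfile_nonneg ω n)) hne
  exact hω k n₀ h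

end Critical

/-- main theorem of the paper: for critical bond percolation on `ℤ^d`,
`d ≥ 2`, almost surely `liminf_n n·φ̂_n(p_c) = 0`. -/
theorem liminf_anchored_profile_at_pc (d : ℕ) (hd : 2 ≤ d)
    (μ : Measure (Config d)) (hμ : IsBernoulli μ (pcrit d)) :
    μ {ω | liminf (fun n : ℕ => (n : ℝ) * anchoredProfile ω n) atTop = 0} = 1 :=
  liminf_anchored_profile_at_pc_general d hd (pcrit d) le_rfl μ hμ
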